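/- arXiv:1911.04349 — 3 statements merged into one kernel-verified Lean document; each statement's English description precedes it below -/
import Mathlib

section
/- Fix α with 1/2 < α < 1 and let s₁ > (1−α)/2. Then there exists C > 0 such that for every μ ∈ ℤ and all nonnegative sequences ω⁽¹⁾, ω⁽²⁾, ω⁽³⁾ : ℤ → [0,∞): ( Σ_{n ∈ ℤ} ⟨n⟩^{2s₁} ( Σ_{(n₁,n₂,n₃) ∈ Γ_n^N, |Φ − μ| < 1} ω⁽¹⁾_{n₁} ω⁽²⁾_{n₂} ω⁽³⁾_{n₃} )² )^{1/2} ≤ C ∏_{j=1}^{3} ‖ω⁽ʲ⁾‖_{ℓ²_{s₁}}. -/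
open scoped ENNReal NNReal

/-- `⟨n⟩ = (1+n²)^{1/2}`. -/
noncomputable def jbZ (n : ℤ) : ℝ := Real.sqrt (1 + (n : ℝ) ^ 2)

/-- The weighted `ℓ²_s(ℤ)` norm (valued in `[0,∞]`). -/
noncomputable def l2sZ (s : ℝ) (ω : ℤ → ℝ≥0) : ℝ≥0∞ :=
  (∑' n : ℤ, ENNReal.ofReal (jbZ n ^ (2 * s)) * ((ω n : ℝ≥0∞)) ^ 2) ^ (1/2 : ℝ)

/-- `Φ = |n|^{2α} - |n₁|^{2α} + |n₂|^{2α} - |n₃|^{2α}`. -/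
noncomputable def PhiFrac (α : ℝ) (n n₁ n₂ n₃ : ℤ) : ℝ :=
  |(n : ℝ)| ^ (2 * α) - |(n₁ : ℝ)| ^ (2 * α) + |(n₂ : ℝ)| ^ (2 * α) - |(n₃ : ℝ)| ^ (2 * α)

/-- `(n₁,n₂,n₃) ∈ Γ_n^N`: `n₁ - n₂ + n₃ = n`, `|n₂-n₁| > |n₂|^{1-α}` and `|n₂-n₃| > |n₂|^{1-α}`. -/
noncomputable def GammaN (α : ℝ) (n n₁ n₂ n₃ : ℤ) : Prop :=
  n₁ - n₂ + n₃ = n ∧ (|n₂ - n₁| : ℝ) > |(n₂ : ℝ)| ^ (1 - α) ∧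
    (|n₂ - n₃| : ℝ) > |(n₂ : ℝ)| ^ (1 - α)

/-!
Put `p = 2α` and `m = n₁ + n₃ = n + n₂`, so that `Φ` is the difference of the energies
`|b|^p + |m - b|^p` of the pairs `(n, n₂)` and `(n₁, n₃)`. The energy is convex in `b` and symmetric
about `m / 2`, with second derivative at least of order `ρ^(p - 2)` for `b` at distance at most `ρ`
from `m / 2` once `ρ ≥ |m|`. Hence an energy window of length `2` contains `O(⟨m⟩^(1 - α))` balanced
frequencies `b` (those for which `b` and `m - b` have size comparable to `m`) and `O(1)` others.

After moving the weights `⟨·⟩^s` onto the sequences, Cauchy–Schwarz in `(m, n₁)` reduces the bound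
to two sums over such windows, with weights `(⟨m⟩ / (⟨b⟩⟨m - b⟩))^(2s)` and
`(⟨n⟩ / (⟨m⟩⟨n - m⟩))^(2s)`. Both weights are bounded, and they are `O(⟨m⟩^(-2s))` at balanced
frequencies, which pays for the `⟨m⟩^(1 - α)` of them because `2s ≥ 1 - α`.
-/

section Convexity

variable {p ρ : ℝ}

lemma hasDerivAt_rpow_sub_mul_sq (hp : 1 ≤ p) (c x : ℝ) :
    HasDerivAt (fun x ↦ x ^ p - c / 2 * x ^ 2) (p * x ^ (p - 1) - c * x) x := by
  refine ((Real.hasDerivAt_rpow_const (Or.inr hp)).sub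
    ((hasDerivAt_pow 2 x).const_mul (c / 2))).congr_deriv ?_
  push_cast
  ring

lemma convexOn_rpow_sub_mul_sq (hp : 1 ≤ p) (hp2 : p ≤ 2) :
    ConvexOn ℝ (Set.Icc 0 ρ) fun x ↦ x ^ p - p * (p - 1) * ρ ^ (p - 2) / 2 * x ^ 2 := by
  refine convexOn_of_hasDerivWithinAt2_nonneg (convex_Icc 0 ρ)
    (f' := fun x ↦ p * x ^ (p - 1) - p * (p - 1) * ρ ^ (p - 2) * x)
    (f'' := fun x ↦ p * ((p - 1) * x ^ (p - 1 - 1)) - p * (p - 1) * ρ ^ (p - 2)) ?_ ?_ ?_ ?_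
  · exact fun x _ ↦ (hasDerivAt_rpow_sub_mul_sq hp _ x).continuousAt.continuousWithinAt
  · exact fun x _ ↦ (hasDerivAt_rpow_sub_mul_sq hp _ x).hasDerivWithinAt
  all_goals
    intro x hx
    rw [interior_Icc] at hx
  · exact (((Real.hasDerivAt_rpow_const (Or.inl hx.1.ne')).const_mul p).sub
      (hasDerivAt_const_mul _)).hasDerivWithinAt
  · have hpow : ρ ^ (p - 2) ≤ x ^ (p - 2) :=
      Real.rpow_le_rpow_of_nonpos hx.1 hx.2.le (by linarith)
    have hcoeff : 0 ≤ p * (p - 1) := mul_nonneg (by linarith) (by linarith)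
    rw [show p - 1 - 1 = p - 2 by ring, ← mul_assoc, ← mul_sub]
    exact mul_nonneg hcoeff (sub_nonneg.2 hpow)

lemma monotoneOn_rpow_sub_mul_sq (hp : 1 ≤ p) (hp2 : p ≤ 2) :
    MonotoneOn (fun x ↦ x ^ p - p * (p - 1) * ρ ^ (p - 2) / 2 * x ^ 2) (Set.Icc 0 ρ) := by
  refine monotoneOn_of_hasDerivWithinAt_nonneg (convex_Icc 0 ρ)
    (f' := fun x ↦ p * x ^ (p - 1) - p * (p - 1) * ρ ^ (p - 2) * x) ?_ ?_ ?_
  · exact fun x _ ↦ (hasDerivAt_rpow_sub_mul_sq hp _ x).continuousAt.continuousWithinAt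
  · exact fun x _ ↦ (hasDerivAt_rpow_sub_mul_sq hp _ x).hasDerivWithinAt
  · intro x hx
    rw [interior_Icc] at hx
    have hpow : (p - 1) * ρ ^ (p - 2) ≤ 1 * x ^ (p - 2) :=
      mul_le_mul (by linarith) (Real.rpow_le_rpow_of_nonpos hx.1 hx.2.le (by linarith))
        (Real.rpow_nonneg (hx.1.trans hx.2).le _) zero_le_one
    have hx1 : x ^ (p - 1) = x ^ (p - 2) * x := by
      rw [← Real.rpow_add_one hx.1.ne']; ring_nf
    rw [hx1, show p * (x ^ (p - 2) * x) - p * (p - 1) * ρ ^ (p - 2) * x =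
      p * x * (1 * x ^ (p - 2) - (p - 1) * ρ ^ (p - 2)) by ring]
    exact mul_nonneg (mul_nonneg (by linarith) hx.1.le) (sub_nonneg.2 hpow)

lemma convexOn_abs_rpow_sub_mul_sq (hp : 1 ≤ p) (hp2 : p ≤ 2) :
    ConvexOn ℝ (Set.Icc (-ρ) ρ) fun x ↦ |x| ^ p - p * (p - 1) * ρ ^ (p - 2) / 2 * x ^ 2 := by
  have himage : (fun x : ℝ ↦ |x|) '' Set.Icc (-ρ) ρ ⊆ Set.Icc 0 ρ := by
    rintro _ ⟨x, hx, rfl⟩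
    exact ⟨abs_nonneg x, abs_le.2 hx⟩
  have habs : ConvexOn ℝ (Set.Icc (-ρ) ρ) fun x : ℝ ↦ |x| :=
    (convexOn_norm convex_univ).subset (Set.subset_univ _) (convex_Icc _ _)
  have hconvex_image : Convex ℝ ((fun x : ℝ ↦ |x|) '' Set.Icc (-ρ) ρ) :=
    ((isPreconnected_Icc.image _ continuous_abs.continuousOn).ordConnected).convex
  simpa only [Function.comp_def, sq_abs] using
    ((convexOn_rpow_sub_mul_sq hp hp2).subset himage hconvex_image).comp habs
      ((monotoneOn_rpow_sub_mul_sq hp hp2).mono himage)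

lemma convexOn_symm_add_le {s : Set ℝ} {f : ℝ → ℝ} (hf : ConvexOn ℝ s f) {y u v : ℝ}
    (hadd : y + v ∈ s) (hsub : y - v ∈ s) (huv : |u| ≤ |v|) :
    f (y + u) + f (y - u) ≤ f (y + v) + f (y - v) := by
  obtain rfl | hv := eq_or_ne v 0
  · simp [abs_nonpos_iff.1 (huv.trans_eq abs_zero)]
  have hratio : |u / v| ≤ 1 := by rw [abs_div]; exact div_le_one_of_le₀ huv (abs_nonneg v)
  obtain ⟨hlo, hhi⟩ := abs_le.1 hratio
  have hu : u = u / v * v := by field_simp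
  have hplus := hf.2 hadd hsub (show 0 ≤ (1 + u / v) / 2 by linarith)
    (show 0 ≤ (1 - u / v) / 2 by linarith) (by ring)
  have hminus := hf.2 hadd hsub (show 0 ≤ (1 - u / v) / 2 by linarith)
    (show 0 ≤ (1 + u / v) / 2 by linarith) (by ring)
  simp only [smul_eq_mul] at hplus hminus
  rw [show (1 + u / v) / 2 * (y + v) + (1 - u / v) / 2 * (y - v) = y + u / v * v by ring,
    ← hu] at hplus
  rw [show (1 - u / v) / 2 * (y + v) + (1 + u / v) / 2 * (y - v) = y - u / v * v by ring,
    ← hu] at hminus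
  linarith

lemma mul_sq_sub_sq_le_abs_rpow_add_sub (hp : 1 ≤ p) (hp2 : p ≤ 2) {y u v : ℝ}
    (huv : |u| ≤ |v|) (hρ : |y| + |v| ≤ ρ) :
    p * (p - 1) * ρ ^ (p - 2) * (v ^ 2 - u ^ 2) ≤
      (|y + v| ^ p + |y - v| ^ p) - (|y + u| ^ p + |y - u| ^ p) := by
  have hadd : y + v ∈ Set.Icc (-ρ) ρ := abs_le.1 ((abs_add_le y v).trans hρ)
  have hsub : y - v ∈ Set.Icc (-ρ) ρ := abs_le.1 ((abs_sub y v).trans hρ)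
  have hsymm := convexOn_symm_add_le (convexOn_abs_rpow_sub_mul_sq hp hp2) hadd hsub huv
  linarith

end Convexity

section JapaneseBracket

lemma one_le_jbZ (n : ℤ) : 1 ≤ jbZ n :=
  Real.one_le_sqrt.2 (le_add_of_nonneg_right (sq_nonneg _))

lemma jbZ_pos (n : ℤ) : 0 < jbZ n := one_pos.trans_le (one_le_jbZ n)

lemma abs_le_jbZ (n : ℤ) : |(n : ℝ)| ≤ jbZ n :=
  Real.abs_le_sqrt (le_add_of_nonneg_left zero_le_one)

lemma jbZ_neg (n : ℤ) : jbZ (-n) = jbZ n := by simp [jbZ]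

lemma jbZ_le_mul_of_abs_le {c : ℝ} (hc : 1 ≤ c) {m n : ℤ} (h : |(m : ℝ)| ≤ c * |(n : ℝ)|) :
    jbZ m ≤ c * jbZ n := by
  rw [jbZ, jbZ, Real.sqrt_le_left (by positivity), mul_pow, Real.sq_sqrt (by positivity)]
  have hsq : (m : ℝ) ^ 2 ≤ c ^ 2 * (n : ℝ) ^ 2 := by
    rw [← sq_abs, ← sq_abs (n : ℝ), ← mul_pow]
    gcongr
  nlinarith

lemma jbZ_add_le (m n : ℤ) : jbZ (m + n) ≤ 2 * (jbZ m * jbZ n) := by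
  rw [jbZ, jbZ, jbZ, ← Real.sqrt_mul (by positivity), Real.sqrt_le_left (by positivity), mul_pow,
    Real.sq_sqrt (by positivity)]
  push_cast
  nlinarith [sq_nonneg ((m : ℝ) - n), sq_nonneg ((m : ℝ) * n)]

end JapaneseBracket

section IntegerSets

variable {S : Set ℤ}

lemma exists_finset_card_le_of_sub_le {D : ℝ} (hD : 0 ≤ D)
    (hS : ∀ a ∈ S, ∀ b ∈ S, (b : ℝ) - a ≤ D) :
    ∃ t : Finset ℤ, S ⊆ t ∧ (t.card : ℝ) ≤ D + 1 := by
  have hsub : ∀ a ∈ S, ∀ b ∈ S, b - a ≤ ⌊D⌋ := fun a ha b hb ↦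
    Int.le_floor.2 (by exact_mod_cast hS a ha b hb)
  obtain rfl | ⟨c, hc⟩ := S.eq_empty_or_nonempty
  · exact ⟨∅, Set.empty_subset _, by simpa using by linarith⟩
  obtain ⟨a, ha, hmin⟩ := Int.exists_least_of_bdd (P := (· ∈ S))
    ⟨c - ⌊D⌋, fun b hb ↦ by linarith [hsub b hb c hc]⟩ ⟨c, hc⟩
  refine ⟨Finset.Icc a (a + ⌊D⌋), fun b hb ↦ ?_, ?_⟩
  · simp only [Finset.coe_Icc, Set.mem_Icc]
    exact ⟨hmin b hb, by linarith [hsub a ha b hb]⟩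
  · have hcard : ((Finset.Icc a (a + ⌊D⌋)).card : ℤ) = ⌊D⌋ + 1 := by
      have := Int.floor_nonneg.2 hD
      rw [Int.card_Icc_of_le _ _ (by linarith)]
      ring
    calc ((Finset.Icc a (a + ⌊D⌋)).card : ℝ) = ⌊D⌋ + 1 := by exact_mod_cast hcard
      _ ≤ D + 1 := by gcongr; exact Int.floor_le D

lemma exists_finset_card_le_of_abs_sub_le (c : ℝ) {D : ℝ} (hD : 0 ≤ D)
    (hS : ∀ a ∈ S, ∀ b ∈ S, |(b : ℝ) - c| - |(a : ℝ) - c| ≤ D) :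
    ∃ t : Finset ℤ, S ⊆ t ∧ (t.card : ℝ) ≤ 2 * (D + 1) := by
  obtain ⟨t, ht, htcard⟩ := exists_finset_card_le_of_sub_le (S := {b ∈ S | c ≤ b}) hD <| by
    rintro a ⟨ha, hac⟩ b ⟨hb, hbc⟩
    have := hS a ha b hb
    rw [abs_of_nonneg (sub_nonneg.2 hac), abs_of_nonneg (sub_nonneg.2 hbc)] at this
    linarith
  obtain ⟨t', ht', htcard'⟩ := exists_finset_card_le_of_sub_le (S := {b ∈ S | b ≤ c}) hD <| by
    rintro a ⟨ha, hac⟩ b ⟨hb, hbc⟩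
    have := hS b hb a ha
    rw [abs_of_nonpos (sub_nonpos.2 hac), abs_of_nonpos (sub_nonpos.2 hbc)] at this
    linarith
  refine ⟨t ∪ t', fun b hb ↦ ?_, ?_⟩
  · rw [Finset.coe_union]
    exact (le_total c b).imp (fun h ↦ ht ⟨hb, h⟩) fun h ↦ ht' ⟨hb, h⟩
  · calc ((t ∪ t').card : ℝ) ≤ t.card + t'.card := by exact_mod_cast Finset.card_union_le t t'
      _ ≤ 2 * (D + 1) := by linarith

lemma tsum_subtype_ofReal_le {ι : Type*} {S : Set ι} {t : Finset ι} (hSt : S ⊆ t) {f : ι → ℝ}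
    {N V : ℝ} (hN : t.card ≤ N) (hV : 0 ≤ V) (hf : ∀ i ∈ S, f i ≤ V) :
    ∑' i : S, ENNReal.ofReal (f i) ≤ ENNReal.ofReal (N * V) :=
  calc ∑' i : S, ENNReal.ofReal (f i) ≤ ∑' _ : S, ENNReal.ofReal V :=
        ENNReal.tsum_le_tsum fun i ↦ ENNReal.ofReal_le_ofReal (hf i i.2)
    _ ≤ ∑' _ : (t : Set ι), ENNReal.ofReal V := ENNReal.tsum_mono_subtype (fun _ ↦ _) hSt
    _ = ENNReal.ofReal (t.card * V) := by
        rw [Finset.tsum_subtype' t fun _ ↦ ENNReal.ofReal V, Finset.sum_const, nsmul_eq_mul,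
          ENNReal.ofReal_mul t.card.cast_nonneg, ENNReal.ofReal_natCast]
    _ ≤ ENNReal.ofReal (N * V) := ENNReal.ofReal_le_ofReal (by gcongr)

end IntegerSets

/-- The sum `|b|^p + |m - b|^p` of the dispersion symbols of two frequencies with sum `m`. -/
noncomputable def pairEnergy (p : ℝ) (m b : ℤ) : ℝ := |(b : ℝ)| ^ p + |(m : ℝ) - b| ^ p

/-- The frequencies `b` for which the pair `(b, m - b)` has energy within `1` of `t`. -/
def resonantSet (p : ℝ) (m : ℤ) (t : ℝ) : Set ℤ := {b | |pairEnergy p m b - t| < 1}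

/-- The frequencies `b` for which `b` and `m - b` are comparable: both lie between `m / 4` and
`3 * m / 4`. -/
def balancedSet (m : ℤ) : Set ℤ := {b | |(b : ℝ) - m / 2| ≤ |(m : ℝ)| / 4}

section Counting

variable {p : ℝ} {m a b : ℤ} {t : ℝ}

lemma pairEnergy_eq_symm (p : ℝ) (m b : ℤ) :
    pairEnergy p m b = |(m : ℝ) / 2 + (b - m / 2)| ^ p + |(m : ℝ) / 2 - (b - m / 2)| ^ p := by
  rw [pairEnergy]
  congr 3 <;> ring

lemma mul_sq_sub_sq_le_of_mem_resonantSet (hp : 1 ≤ p) (hp2 : p ≤ 2)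
    (ha : a ∈ resonantSet p m t) (hb : b ∈ resonantSet p m t)
    (hab : |(a : ℝ) - m / 2| ≤ |(b : ℝ) - m / 2|) {ρ : ℝ} (hρ0 : 0 < ρ)
    (hρ : |(m : ℝ) / 2| + |(b : ℝ) - m / 2| ≤ ρ) :
    p * (p - 1) * (|(b : ℝ) - m / 2| ^ 2 - |(a : ℝ) - m / 2| ^ 2) ≤ 2 * ρ ^ (2 - p) := by
  have hgap : pairEnergy p m b - pairEnergy p m a ≤ 2 := by
    linarith [(abs_lt.1 ha.out).1, (abs_lt.1 hb.out).2]
  rw [pairEnergy_eq_symm, pairEnergy_eq_symm] at hgap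
  have hcurv := (mul_sq_sub_sq_le_abs_rpow_add_sub hp hp2 hab hρ).trans hgap
  have hinv : ρ ^ (p - 2) * ρ ^ (2 - p) = 1 := by
    rw [← Real.rpow_add hρ0, show p - 2 + (2 - p) = 0 by ring, Real.rpow_zero]
  rw [sq_abs, sq_abs]
  calc p * (p - 1) * (((b : ℝ) - m / 2) ^ 2 - ((a : ℝ) - m / 2) ^ 2)
      = p * (p - 1) * ρ ^ (p - 2) * (((b : ℝ) - m / 2) ^ 2 - ((a : ℝ) - m / 2) ^ 2) *
          ρ ^ (2 - p) := by
        linear_combination (-(p * (p - 1) * (((b : ℝ) - m / 2) ^ 2 - ((a : ℝ) - m / 2) ^ 2))) * hinv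
    _ ≤ 2 * ρ ^ (2 - p) := by gcongr

lemma abs_sub_abs_le_of_mem_balancedSet (hp : 1 < p) (hp2 : p ≤ 2)
    (ha : a ∈ resonantSet p m t) (hb : b ∈ resonantSet p m t) (hb' : b ∈ balancedSet m) :
    |(b : ℝ) - m / 2| - |(a : ℝ) - m / 2| ≤ √(2 / (p * (p - 1))) * jbZ m ^ (1 - p / 2) := by
  have hq : 0 < p * (p - 1) := mul_pos (by linarith) (by linarith)
  have hm := jbZ_pos m
  obtain hba | hab := le_total |(b : ℝ) - m / 2| |(a : ℝ) - m / 2|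
  · exact (sub_nonpos.2 hba).trans (by positivity)
  refine le_of_sq_le_sq ?_ (by positivity)
  have hρ : |(m : ℝ) / 2| + |(b : ℝ) - m / 2| ≤ jbZ m := by
    have := hb'.out
    rw [abs_div, abs_two]
    linarith [abs_le_jbZ m, abs_nonneg (m : ℝ)]
  have hcurv := mul_sq_sub_sq_le_of_mem_resonantSet hp.le hp2 ha hb hab hm hρ
  have hpow : (jbZ m ^ (1 - p / 2)) ^ 2 = jbZ m ^ (2 - p) := by
    rw [← Real.rpow_mul_natCast hm.le]; congr 1; push_cast; ring
  calc (|(b : ℝ) - m / 2| - |(a : ℝ) - m / 2|) ^ 2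
      ≤ |(b : ℝ) - m / 2| ^ 2 - |(a : ℝ) - m / 2| ^ 2 := by
        nlinarith [mul_nonneg (abs_nonneg ((a : ℝ) - m / 2)) (sub_nonneg.2 hab)]
    _ ≤ 2 * jbZ m ^ (2 - p) / (p * (p - 1)) := (le_div_iff₀' hq).2 hcurv
    _ = (√(2 / (p * (p - 1))) * jbZ m ^ (1 - p / 2)) ^ 2 := by
        rw [mul_pow, Real.sq_sqrt (by positivity), hpow]; ring

lemma abs_sub_abs_le_of_notMem_balancedSet (hp : 1 < p) (hp2 : p ≤ 2)
    (ha : a ∈ resonantSet p m t) (hb : b ∈ resonantSet p m t) (hb' : b ∉ balancedSet m) :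
    |(b : ℝ) - m / 2| - |(a : ℝ) - m / 2| ≤ 6 / (p * (p - 1)) := by
  have hq : 0 < p * (p - 1) := mul_pos (by linarith) (by linarith)
  obtain hba | hab := le_total |(b : ℝ) - m / 2| |(a : ℝ) - m / 2|
  · exact (sub_nonpos.2 hba).trans (by positivity)
  have hb0 : |(m : ℝ)| / 4 < |(b : ℝ) - m / 2| := not_le.1 hb'
  have hρ : |(m : ℝ) / 2| + |(b : ℝ) - m / 2| ≤ 3 * |(b : ℝ) - m / 2| := by
    rw [abs_div, abs_two]
    linarith
  set u := |(a : ℝ) - m / 2|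
  set v := |(b : ℝ) - m / 2|
  have hu : 0 ≤ u := abs_nonneg _
  have hv : 0 < v := by linarith [abs_nonneg (m : ℝ)]
  rw [le_div_iff₀' hq]
  obtain hsmall | hlarge := le_total (3 * v) 1
  · nlinarith
  have hpow : (3 * v) ^ (2 - p) ≤ 3 * v := by
    simpa using Real.rpow_le_rpow_of_exponent_le hlarge (show 2 - p ≤ 1 by linarith)
  have hcurv : p * (p - 1) * (v ^ 2 - u ^ 2) ≤ 2 * (3 * v) ^ (2 - p) :=
    mul_sq_sub_sq_le_of_mem_resonantSet hp.le hp2 ha hb hab (by linarith) hρ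
  refine le_of_mul_le_mul_right ?_ hv
  calc p * (p - 1) * (v - u) * v ≤ p * (p - 1) * (v - u) * (v + u) := 
        mul_le_mul_of_nonneg_left (by linarith) (mul_nonneg hq.le (sub_nonneg.2 hab))
    _ = p * (p - 1) * (v ^ 2 - u ^ 2) := by ring
    _ ≤ 6 * v := by linarith

end Counting

section WeightedCounting

variable {p σ C : ℝ} {m : ℤ} {t : ℝ} {r : ℤ → ℝ}

lemma tsum_resonantSet_diff_balancedSet_le (hp : 1 < p) (hp2 : p ≤ 2) (hσ : 0 ≤ σ) (hC : 0 ≤ C)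
    (hr0 : ∀ b, 0 ≤ r b) (hr : ∀ b, r b ≤ C) :
    ∑' b : ↥(resonantSet p m t \ balancedSet m), ENNReal.ofReal (r b ^ σ) ≤
      ENNReal.ofReal (2 * (6 / (p * (p - 1)) + 1) * C ^ σ) := by
  have hq : 0 < p * (p - 1) := mul_pos (by linarith) (by linarith)
  obtain ⟨F, hF, hcard⟩ := exists_finset_card_le_of_abs_sub_le ((m : ℝ) / 2)
    (div_pos (by norm_num) hq).le
    fun a (ha : a ∈ resonantSet p m t \ balancedSet m) b hb ↦
      abs_sub_abs_le_of_notMem_balancedSet hp hp2 ha.1 hb.1 hb.2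
  exact tsum_subtype_ofReal_le hF hcard (by positivity) fun b _ ↦
    Real.rpow_le_rpow (hr0 b) (hr b) hσ

lemma tsum_resonantSet_inter_balancedSet_le (hp : 1 < p) (hp2 : p ≤ 2) (hσ : 1 - p / 2 ≤ σ)
    (hC : 0 ≤ C) (hr0 : ∀ b, 0 ≤ r b) (hr : ∀ b ∈ balancedSet m, r b * jbZ m ≤ C) :
    ∑' b : ↥(resonantSet p m t ∩ balancedSet m), ENNReal.ofReal (r b ^ σ) ≤
      ENNReal.ofReal (2 * (√(2 / (p * (p - 1))) + 1) * C ^ σ) := by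
  have hm := jbZ_pos m
  have hσ0 : 0 ≤ σ := by linarith
  obtain ⟨F, hF, hcard⟩ := exists_finset_card_le_of_abs_sub_le ((m : ℝ) / 2)
    (show 0 ≤ √(2 / (p * (p - 1))) * jbZ m ^ (1 - p / 2) by positivity)
    fun a (ha : a ∈ resonantSet p m t ∩ balancedSet m) b hb ↦
      abs_sub_abs_le_of_mem_balancedSet hp hp2 ha.1 hb.1 hb.2
  have hN : 2 * (√(2 / (p * (p - 1))) * jbZ m ^ (1 - p / 2) + 1) ≤
      2 * (√(2 / (p * (p - 1))) + 1) * jbZ m ^ σ :=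
    calc _ ≤ 2 * (√(2 / (p * (p - 1))) * jbZ m ^ σ + jbZ m ^ σ) := by
          gcongr
          · exact one_le_jbZ m
          · exact Real.one_le_rpow (one_le_jbZ m) hσ0
      _ = 2 * (√(2 / (p * (p - 1))) + 1) * jbZ m ^ σ := by ring
  have hV : ∀ b ∈ resonantSet p m t ∩ balancedSet m, r b ^ σ ≤ (C / jbZ m) ^ σ := fun b hb ↦
    Real.rpow_le_rpow (hr0 b) ((le_div_iff₀ hm).2 (hr b hb.2)) hσ0
  refine (tsum_subtype_ofReal_le hF (hcard.trans hN) (by positivity) hV).trans_eq ?_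
  rw [mul_assoc, ← Real.mul_rpow hm.le (by positivity), mul_div_cancel₀ C hm.ne']

lemma exists_tsum_resonantSet_le (hp : 1 < p) (hp2 : p ≤ 2) (hσ : 1 - p / 2 ≤ σ) (hC : 0 ≤ C) :
    ∃ K : ℝ, 0 < K ∧ ∀ (m : ℤ) (t : ℝ) (r : ℤ → ℝ), (∀ b, 0 ≤ r b) → (∀ b, r b ≤ C) →
      (∀ b ∈ balancedSet m, r b * jbZ m ≤ C) →
      ∑' b : resonantSet p m t, ENNReal.ofReal (r b ^ σ) ≤ ENNReal.ofReal K := by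
  have hq : 0 < p * (p - 1) := mul_pos (by linarith) (by linarith)
  set K₁ := 2 * (√(2 / (p * (p - 1))) + 1) * C ^ σ
  set K₂ := 2 * (6 / (p * (p - 1)) + 1) * C ^ σ
  have hK₁ : 0 ≤ K₁ := by positivity
  have hK₂ : 0 ≤ K₂ :=
    mul_nonneg (by linarith [div_pos (show (0 : ℝ) < 6 by norm_num) hq]) (by positivity)
  refine ⟨K₁ + K₂ + 1, by positivity, fun m t r hr0 hr hr' ↦ ?_⟩
  calc ∑' b : resonantSet p m t, ENNReal.ofReal (r b ^ σ)
      = ∑' b : ↥(resonantSet p m t ∩ balancedSet m ∪ resonantSet p m t \ balancedSet m),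
          ENNReal.ofReal (r b ^ σ) := by rw [Set.inter_union_sdiff]
    _ ≤ ∑' b : ↥(resonantSet p m t ∩ balancedSet m), ENNReal.ofReal (r b ^ σ) +
          ∑' b : ↥(resonantSet p m t \ balancedSet m), ENNReal.ofReal (r b ^ σ) :=
        ENNReal.tsum_union_le (fun b ↦ ENNReal.ofReal (r b ^ σ)) _ _
    _ ≤ ENNReal.ofReal K₁ + ENNReal.ofReal K₂ :=
        add_le_add (tsum_resonantSet_inter_balancedSet_le hp hp2 hσ hC hr0 hr')
          (tsum_resonantSet_diff_balancedSet_le hp hp2 (by linarith) hC hr0 hr)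
    _ ≤ ENNReal.ofReal (K₁ + K₂ + 1) := by
        rw [← ENNReal.ofReal_add hK₁ hK₂]
        exact ENNReal.ofReal_le_ofReal (by linarith)

end WeightedCounting

/-- The ratio `⟨x + y⟩ / (⟨x⟩ ⟨y⟩)`, bounded by Peetre's inequality. -/
noncomputable def bracketRatio (x y : ℤ) : ℝ := jbZ (x + y) / (jbZ x * jbZ y)

section BracketRatio

variable {m b : ℤ}

lemma bracketRatio_nonneg (x y : ℤ) : 0 ≤ bracketRatio x y := by
  have hx := jbZ_pos x
  have hy := jbZ_pos y
  have hxy := jbZ_pos (x + y)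
  unfold bracketRatio
  positivity

lemma bracketRatio_le_two (x y : ℤ) : bracketRatio x y ≤ 2 :=
  (div_le_iff₀ (mul_pos (jbZ_pos x) (jbZ_pos y))).2 (jbZ_add_le x y)

lemma abs_le_of_mem_balancedSet (hb : b ∈ balancedSet m) :
    |(m : ℝ)| ≤ 4 * |(b : ℝ)| ∧ |(m : ℝ)| ≤ 4 * |((m - b : ℤ) : ℝ)| ∧
      |(b : ℝ)| ≤ 3 * |((m - b : ℤ) : ℝ)| := by
  have h := abs_le.1 hb.out
  push_cast
  grind

lemma bracketRatio_mul_jbZ_le (hb : b ∈ balancedSet m) : bracketRatio b (m - b) * jbZ m ≤ 16 := by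
  obtain ⟨h₁, h₂, -⟩ := abs_le_of_mem_balancedSet hb
  have hb₁ := jbZ_le_mul_of_abs_le (by norm_num) h₁
  have hb₂ := jbZ_le_mul_of_abs_le (by norm_num) h₂
  rw [bracketRatio, add_sub_cancel, div_mul_eq_mul_div,
    div_le_iff₀ (mul_pos (jbZ_pos b) (jbZ_pos (m - b)))]
  calc jbZ m * jbZ m ≤ 4 * jbZ b * (4 * jbZ (m - b)) :=
        mul_le_mul hb₁ hb₂ (jbZ_pos m).le (by linarith [jbZ_pos b])
    _ = 16 * (jbZ b * jbZ (m - b)) := by ring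

lemma bracketRatio_sub_mul_jbZ_le (hb : b ∈ balancedSet m) :
    bracketRatio m (b - m) * jbZ m ≤ 3 := by
  have h := jbZ_le_mul_of_abs_le (by norm_num) (abs_le_of_mem_balancedSet hb).2.2
  have hm := jbZ_pos m
  rw [bracketRatio, add_sub_cancel, ← neg_sub, jbZ_neg, div_mul_eq_mul_div,
    div_le_iff₀ (mul_pos hm (jbZ_pos (m - b)))]
  calc jbZ b * jbZ m ≤ 3 * jbZ (m - b) * jbZ m := by gcongr
    _ = 3 * (jbZ m * jbZ (m - b)) := by ring

end BracketRatio

section SchurTest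

lemma tsum_sq_le_tsum_mul_tsum {ι : Type*} {f a b : ι → ℝ≥0∞} (h : ∀ i, f i ^ 2 ≤ a i * b i) :
    (∑' i, f i) ^ 2 ≤ (∑' i, a i) * ∑' i, b i := by
  have hsqrt : ∀ x : ℝ≥0∞, (x ^ (1 / 2 : ℝ)) ^ 2 = x := fun x ↦ by
    rw [← ENNReal.rpow_mul_natCast]; norm_num
  have hf : ∀ i, f i ≤ a i ^ (1 / 2 : ℝ) * b i ^ (1 / 2 : ℝ) := fun i ↦ by
    rw [← ENNReal.pow_le_pow_left_iff two_ne_zero, mul_pow, hsqrt, hsqrt]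
    exact h i
  have hsum : ∑' i, f i ≤ (∑' i, a i) ^ (1 / 2 : ℝ) * (∑' i, b i) ^ (1 / 2 : ℝ) := by
    rw [ENNReal.tsum_eq_iSup_sum]
    refine iSup_le fun s ↦ ?_
    calc ∑ i ∈ s, f i ≤ ∑ i ∈ s, a i ^ (1 / 2 : ℝ) * b i ^ (1 / 2 : ℝ) :=
          Finset.sum_le_sum fun i _ ↦ hf i
      _ ≤ (∑ i ∈ s, a i) ^ (1 / 2 : ℝ) * (∑ i ∈ s, b i) ^ (1 / 2 : ℝ) := by
          simpa only [ENNReal.rpow_ofNat, hsqrt] using ENNReal.inner_le_Lp_mul_Lq s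
            (fun i ↦ a i ^ (1 / 2 : ℝ)) (fun i ↦ b i ^ (1 / 2 : ℝ)) Real.HolderConjugate.two_two
      _ ≤ (∑' i, a i) ^ (1 / 2 : ℝ) * (∑' i, b i) ^ (1 / 2 : ℝ) := by
          gcongr <;> exact ENNReal.sum_le_tsum s
  calc (∑' i, f i) ^ 2 ≤ ((∑' i, a i) ^ (1 / 2 : ℝ) * (∑' i, b i) ^ (1 / 2 : ℝ)) ^ 2 := by gcongr
    _ = (∑' i, a i) * ∑' i, b i := by rw [mul_pow, hsqrt, hsqrt]

variable {G : Type*} [AddGroup G]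

lemma tsum_prod_mul_sub (f g : G → ℝ≥0∞) :
    ∑' x : G × G, f x.2 * g (x.1 - x.2) = (∑' b, f b) * ∑' b, g b := by
  rw [ENNReal.tsum_prod', ENNReal.tsum_comm, ← ENNReal.tsum_mul_right]
  refine tsum_congr fun b ↦ ?_
  dsimp only
  rw [ENNReal.tsum_mul_left, ← (Equiv.subRight b).tsum_eq g]
  rfl

/- Cauchy–Schwarz in `(m, l)` for fixed `n`, separating `h₂ (m - n)` from `h₁ l * h₃ (m - l)`: then
`a` is only ever summed over `l`, and `b` only over `n`. -/
lemma tsum_sq_trilinear_le {k a b : G → G → G → ℝ≥0∞} {A B : ℝ≥0∞}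
    (hk : ∀ n m l, k n m l ^ 2 ≤ a n m l * b n m l)
    (ha : ∀ n m, ∑' l, a n m l ≤ A) (hb : ∀ m l, ∑' n, b n m l ≤ B) (h₁ h₂ h₃ : G → ℝ≥0∞) :
    ∑' n, (∑' x : G × G, k n x.1 x.2 * (h₁ x.2 * h₂ (x.1 - n) * h₃ (x.1 - x.2))) ^ 2 ≤
      A * B * ((∑' n, h₁ n ^ 2) * (∑' n, h₂ n ^ 2) * ∑' n, h₃ n ^ 2) := by
  have hfst : ∀ n, ∑' x : G × G, a n x.1 x.2 * h₂ (x.1 - n) ^ 2 ≤ A * ∑' m, h₂ m ^ 2 := fun n ↦ by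
    rw [ENNReal.tsum_prod', ← (Equiv.subRight n).tsum_eq (h₂ · ^ 2), ← ENNReal.tsum_mul_left]
    refine ENNReal.tsum_le_tsum fun m ↦ ?_
    dsimp only
    rw [ENNReal.tsum_mul_right]
    exact mul_le_mul_left (ha n m) _
  calc ∑' n, (∑' x : G × G, k n x.1 x.2 * (h₁ x.2 * h₂ (x.1 - n) * h₃ (x.1 - x.2))) ^ 2
      ≤ ∑' n, A * (∑' m, h₂ m ^ 2) *
          ∑' x : G × G, b n x.1 x.2 * (h₁ x.2 ^ 2 * h₃ (x.1 - x.2) ^ 2) := by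
        refine ENNReal.tsum_le_tsum fun n ↦
          (tsum_sq_le_tsum_mul_tsum fun x ↦ ?_).trans (mul_le_mul_left (hfst n) _)
        rw [mul_pow, mul_pow, mul_pow]
        exact (mul_le_mul_left (hk n x.1 x.2) _).trans_eq (by ring)
    _ = A * (∑' m, h₂ m ^ 2) *
          ∑' x : G × G, (∑' n, b n x.1 x.2) * (h₁ x.2 ^ 2 * h₃ (x.1 - x.2) ^ 2) := by
        rw [ENNReal.tsum_mul_left, ENNReal.tsum_comm]
        simp only [ENNReal.tsum_mul_right]
    _ ≤ A * (∑' m, h₂ m ^ 2) * ∑' x : G × G, B * (h₁ x.2 ^ 2 * h₃ (x.1 - x.2) ^ 2) := by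
        gcongr with x
        exact hb x.1 x.2
    _ = A * B * ((∑' n, h₁ n ^ 2) * (∑' n, h₂ n ^ 2) * ∑' n, h₃ n ^ 2) := by
        rw [ENNReal.tsum_mul_left, tsum_prod_mul_sub (h₁ · ^ 2) (h₃ · ^ 2)]
        ring

end SchurTest

section Resonance

variable {p s : ℝ}

lemma mem_resonantSet_sub_iff {m n b : ℤ} {μ : ℝ} :
    b ∈ resonantSet p m (pairEnergy p m n - μ) ↔ n ∈ resonantSet p m (pairEnergy p m b + μ) := by
  rw [resonantSet, resonantSet, Set.mem_ofPred_eq, Set.mem_ofPred_eq, abs_sub_comm]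
  ring_nf

/-- The kernel of the trilinear form, as a function of the output frequency `n = n₁ - n₂ + n₃`, the
pair sum `m = n₁ + n₃ = n + n₂` and the input frequency `b = n₁`: the resonance condition
`|Φ - μ| < 1` is that the energies of the pairs `(n, n₂)` and `(n₁, n₃)` differ by `μ` up to `1`,
and the bracket ratios convert `⟨n₁⟩^s ⟨n₂⟩^s ⟨n₃⟩^s` into `⟨n⟩^s`. -/
noncomputable def resonantKernel (p s μ : ℝ) (n m b : ℤ) : ℝ≥0∞ :=
  (resonantSet p m (pairEnergy p m n - μ)).indicator
    (fun b ↦ ENNReal.ofReal (bracketRatio b (m - b) ^ s * bracketRatio m (n - m) ^ s)) b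

lemma exists_tsum_bracketRatio_le (hp : 1 < p) (hp2 : p ≤ 2) {σ : ℝ} (hσ : 1 - p / 2 ≤ σ) :
    ∃ K : ℝ, 0 < K ∧ ∀ (m : ℤ) (t : ℝ),
      ∑' b : resonantSet p m t, ENNReal.ofReal (bracketRatio b (m - b) ^ σ) ≤ ENNReal.ofReal K ∧
      ∑' n : resonantSet p m t, ENNReal.ofReal (bracketRatio m (n - m) ^ σ) ≤ ENNReal.ofReal K := by
  obtain ⟨K, hK, h⟩ := exists_tsum_resonantSet_le hp hp2 hσ (C := 16) (by norm_num)
  have hbound : ∀ x y, bracketRatio x y ≤ 16 := fun x y ↦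
    (bracketRatio_le_two x y).trans (by norm_num)
  refine ⟨K, hK, fun m t ↦ ⟨?_, ?_⟩⟩
  · exact h m t (fun b ↦ bracketRatio b (m - b)) (fun _ ↦ bracketRatio_nonneg _ _)
      (fun _ ↦ hbound _ _) fun _ hb ↦ bracketRatio_mul_jbZ_le hb
  · exact h m t (fun n ↦ bracketRatio m (n - m)) (fun _ ↦ bracketRatio_nonneg _ _)
      (fun _ ↦ hbound _ _) fun _ hb ↦ (bracketRatio_sub_mul_jbZ_le hb).trans (by norm_num)

lemma rpow_two_mul_eq_sq {x : ℝ} (hx : 0 ≤ x) (s : ℝ) : x ^ (2 * s) = (x ^ s) ^ 2 := by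
  rw [mul_comm, Real.rpow_mul hx, Real.rpow_two]

lemma resonantKernel_sq (p s μ : ℝ) (n m b : ℤ) :
    resonantKernel p s μ n m b ^ 2 =
      (resonantSet p m (pairEnergy p m n - μ)).indicator
        (fun b ↦ ENNReal.ofReal (bracketRatio b (m - b) ^ (2 * s))) b *
      (resonantSet p m (pairEnergy p m b + μ)).indicator
        (fun n ↦ ENNReal.ofReal (bracketRatio m (n - m) ^ (2 * s))) n := by
  have hr := bracketRatio_nonneg b (m - b)
  have hr' := bracketRatio_nonneg m (n - m)
  by_cases h : b ∈ resonantSet p m (pairEnergy p m n - μ)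
  · rw [resonantKernel, Set.indicator_of_mem h, Set.indicator_of_mem h,
      Set.indicator_of_mem (mem_resonantSet_sub_iff.1 h),
      ← ENNReal.ofReal_mul (by positivity), rpow_two_mul_eq_sq hr, rpow_two_mul_eq_sq hr',
      ← mul_pow, ENNReal.ofReal_pow (by positivity)]
  · rw [resonantKernel, Set.indicator_of_notMem h, Set.indicator_of_notMem h, zero_mul,
      zero_pow two_ne_zero]

lemma exists_tsum_sq_resonantKernel_le (hp : 1 < p) (hp2 : p ≤ 2) (hs : 1 - p / 2 ≤ 2 * s) :
    ∃ K : ℝ, 0 < K ∧ ∀ (μ : ℝ) (h₁ h₂ h₃ : ℤ → ℝ≥0∞),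
      ∑' n, (∑' x : ℤ × ℤ,
        resonantKernel p s μ n x.1 x.2 * (h₁ x.2 * h₂ (x.1 - n) * h₃ (x.1 - x.2))) ^ 2 ≤
      ENNReal.ofReal K ^ 2 * ((∑' n, h₁ n ^ 2) * (∑' n, h₂ n ^ 2) * ∑' n, h₃ n ^ 2) := by
  obtain ⟨K, hK, h⟩ := exists_tsum_bracketRatio_le hp hp2 hs
  refine ⟨K, hK, fun μ h₁ h₂ h₃ ↦ ?_⟩
  rw [sq (ENNReal.ofReal K)]
  refine tsum_sq_trilinear_le (fun n m b ↦ (resonantKernel_sq p s μ n m b).le)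
    (fun n m ↦ ?_) (fun m b ↦ ?_) h₁ h₂ h₃
  · rw [← tsum_subtype]
    exact (h m _).1
  · rw [← tsum_subtype]
    exact (h m _).2

end Resonance

/-- The sequence `⟨n⟩^s ω_n`, whose `ℓ²` norm is the `ℓ²_s` norm of `ω`. -/
noncomputable def bracketWeight (s : ℝ) (ω : ℤ → ℝ≥0) (n : ℤ) : ℝ≥0∞ :=
  ENNReal.ofReal (jbZ n ^ s) * ω n

section Reindexing

lemma ofReal_jbZ_rpow_two_mul (s : ℝ) (n : ℤ) :
    ENNReal.ofReal (jbZ n ^ (2 * s)) = ENNReal.ofReal (jbZ n ^ s) ^ 2 := by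
  have hn := (jbZ_pos n).le
  rw [rpow_two_mul_eq_sq hn, ENNReal.ofReal_pow (by positivity)]

lemma l2sZ_eq_tsum_bracketWeight_sq (s : ℝ) (ω : ℤ → ℝ≥0) :
    l2sZ s ω = (∑' n, bracketWeight s ω n ^ 2) ^ (1 / 2 : ℝ) := by
  simp only [l2sZ, bracketWeight, mul_pow, ofReal_jbZ_rpow_two_mul]

lemma jbZ_rpow_eq (s : ℝ) (n₁ n₂ n₃ : ℤ) :
    jbZ (n₁ - n₂ + n₃) ^ s =
      bracketRatio n₁ n₃ ^ s * bracketRatio (n₁ + n₃) (-n₂) ^ s *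
        (jbZ n₁ ^ s * jbZ n₂ ^ s * jbZ n₃ ^ s) := by
  have h₁ := jbZ_pos n₁
  have h₂ := jbZ_pos n₂
  have h₃ := jbZ_pos n₃
  have h₁₃ := jbZ_pos (n₁ + n₃)
  have hr := bracketRatio_nonneg n₁ n₃
  have hr' := bracketRatio_nonneg (n₁ + n₃) (-n₂)
  rw [← Real.mul_rpow hr hr', ← Real.mul_rpow h₁.le h₂.le, ← Real.mul_rpow (by positivity) h₃.le,
    ← Real.mul_rpow (by positivity) (by positivity), bracketRatio, bracketRatio, jbZ_neg,
    show n₁ + n₃ + -n₂ = n₁ - n₂ + n₃ by ring]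
  congr 1
  field_simp

lemma phiFrac_eq_pairEnergy_sub (α : ℝ) (n₁ n₂ n₃ : ℤ) :
    PhiFrac α (n₁ - n₂ + n₃) n₁ n₂ n₃ =
      pairEnergy (2 * α) (n₁ + n₃) (n₁ - n₂ + n₃) - pairEnergy (2 * α) (n₁ + n₃) n₁ := by
  have h₂ : ((n₁ + n₃ : ℤ) : ℝ) - (n₁ - n₂ + n₃ : ℤ) = n₂ := by push_cast; ring
  have h₃ : ((n₁ + n₃ : ℤ) : ℝ) - n₁ = n₃ := by push_cast; ring
  rw [PhiFrac, pairEnergy, pairEnergy, h₂, h₃]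
  ring

lemma ofReal_jbZ_rpow_mul_eq {α s μ : ℝ} {n₁ n₂ n₃ : ℤ}
    (hΦ : |PhiFrac α (n₁ - n₂ + n₃) n₁ n₂ n₃ - μ| < 1) (ω₁ ω₂ ω₃ : ℤ → ℝ≥0) :
    ENNReal.ofReal (jbZ (n₁ - n₂ + n₃) ^ s) * (ω₁ n₁ * ω₂ n₂ * ω₃ n₃) =
      resonantKernel (2 * α) s μ (n₁ - n₂ + n₃) (n₁ + n₃) n₁ *
        (bracketWeight s ω₁ n₁ * bracketWeight s ω₂ n₂ * bracketWeight s ω₃ n₃) := by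
  have hmem : n₁ ∈ resonantSet (2 * α) (n₁ + n₃)
      (pairEnergy (2 * α) (n₁ + n₃) (n₁ - n₂ + n₃) - μ) := by
    rw [phiFrac_eq_pairEnergy_sub, sub_right_comm, abs_sub_comm] at hΦ
    exact hΦ
  have h₁ := jbZ_pos n₁
  have h₂ := jbZ_pos n₂
  have hr := bracketRatio_nonneg n₁ n₃
  have hr' := bracketRatio_nonneg (n₁ + n₃) (-n₂)
  rw [resonantKernel, Set.indicator_of_mem hmem, add_sub_cancel_left,
    show n₁ - n₂ + n₃ - (n₁ + n₃) = -n₂ by ring, jbZ_rpow_eq, ENNReal.ofReal_mul (by positivity),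
    ENNReal.ofReal_mul (p := _ * _) (by positivity),
    ENNReal.ofReal_mul (p := jbZ n₁ ^ s) (by positivity)]
  simp only [bracketWeight]
  ring

lemma ofReal_jbZ_rpow_mul_tsum_le (α s μ : ℝ) (n : ℤ) (ω₁ ω₂ ω₃ : ℤ → ℝ≥0) :
    ENNReal.ofReal (jbZ n ^ s) *
        ∑' q : {q : ℤ × ℤ × ℤ // q.1 - q.2.1 + q.2.2 = n ∧
          |PhiFrac α n q.1 q.2.1 q.2.2 - μ| < 1},
          ((ω₁ q.1.1 : ℝ≥0∞) * ω₂ q.1.2.1 * ω₃ q.1.2.2) ≤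
      ∑' x : ℤ × ℤ, resonantKernel (2 * α) s μ n x.1 x.2 *
        (bracketWeight s ω₁ x.2 * bracketWeight s ω₂ (x.1 - n) *
          bracketWeight s ω₃ (x.1 - x.2)) := by
  let e : {q : ℤ × ℤ × ℤ // q.1 - q.2.1 + q.2.2 = n ∧
    |PhiFrac α n q.1 q.2.1 q.2.2 - μ| < 1} → ℤ × ℤ := fun q ↦ (q.1.1 + q.1.2.2, q.1.1)
  have he : Function.Injective e := by
    rintro ⟨⟨n₁, n₂, n₃⟩, h, _⟩ ⟨⟨n₁', n₂', n₃'⟩, h', _⟩ he'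
    simp only [e, Prod.mk.injEq] at h h' he'
    simp only [Subtype.mk.injEq, Prod.mk.injEq]
    omega
  rw [← ENNReal.tsum_mul_left]
  refine le_trans (le_of_eq (tsum_congr ?_)) (ENNReal.tsum_comp_le_tsum_of_injective he _)
  rintro ⟨⟨n₁, n₂, n₃⟩, rfl, hΦ⟩
  have hn₂ : n₁ + n₃ - (n₁ - n₂ + n₃) = n₂ := by ring
  simp only [e, hn₂, add_sub_cancel_left]
  exact ofReal_jbZ_rpow_mul_eq hΦ ω₁ ω₂ ω₃

end Reindexing

theorem fractional_NLS_B1_general (α : ℝ) (hα : 1 / 2 < α) (hα' : α ≤ 1)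
    (s : ℝ) (hs : (1 - α) / 2 ≤ s) :
    ∃ C : ℝ, 0 < C ∧ ∀ (μ : ℝ) (ω₁ ω₂ ω₃ : ℤ → ℝ≥0),
      (∑' n : ℤ, ENNReal.ofReal (jbZ n ^ (2 * s)) *
          (∑' q : {q : ℤ × ℤ × ℤ // q.1 - q.2.1 + q.2.2 = n ∧
              |PhiFrac α n q.1 q.2.1 q.2.2 - μ| < 1},
            ((ω₁ q.1.1 : ℝ≥0∞) * ω₂ q.1.2.1 * ω₃ q.1.2.2)) ^ 2) ^ (1 / 2 : ℝ) ≤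
        ENNReal.ofReal C * (l2sZ s ω₁ * l2sZ s ω₂ * l2sZ s ω₃) := by
  obtain ⟨K, hK, hbound⟩ := exists_tsum_sq_resonantKernel_le (p := 2 * α) (s := s)
    (by linarith) (by linarith) (by linarith)
  refine ⟨K, hK, fun μ ω₁ ω₂ ω₃ ↦ ?_⟩
  simp only [l2sZ_eq_tsum_bracketWeight_sq, ofReal_jbZ_rpow_two_mul, ← mul_pow]
  have hhalf : (0 : ℝ) ≤ 1 / 2 := by norm_num
  have hsqrt : ENNReal.ofReal K = (ENNReal.ofReal K ^ 2) ^ (1 / 2 : ℝ) := by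
    rw [← ENNReal.rpow_natCast, ← ENNReal.rpow_mul]; norm_num
  rw [hsqrt, ← ENNReal.mul_rpow_of_nonneg _ _ hhalf, ← ENNReal.mul_rpow_of_nonneg _ _ hhalf,
    ← ENNReal.mul_rpow_of_nonneg _ _ hhalf]
  refine ENNReal.rpow_le_rpow (le_trans ?_ (hbound μ _ _ _)) hhalf
  gcongr with n
  exact ofReal_jbZ_rpow_mul_tsum_le α s μ n ω₁ ω₂ ω₃

/-- The estimate (B1) for the cubic fractional NLS: for `1/2 < α < 1` and
`s₁ > (1-α)/2`, the `ℓ²_{s₁}` norm of the trilinear form restricted to `Γ_n^N ∩ {|Φ-μ|<1}`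
is bounded by `C ∏_j ‖ω⁽ʲ⁾‖_{ℓ²_{s₁}}`, uniformly in `μ ∈ ℤ`. -/
theorem fractional_NLS_B1 (α : ℝ) (hα : 1/2 < α) (hα' : α < 1)
    (s₁ : ℝ) (hs₁ : (1 - α) / 2 < s₁) :
    ∃ C : ℝ, 0 < C ∧
      ∀ (μ : ℤ) (ω₁ ω₂ ω₃ : ℤ → ℝ≥0),
        (∑' n : ℤ, ENNReal.ofReal (jbZ n ^ (2 * s₁)) *
            (∑' p : {q : ℤ × ℤ × ℤ // GammaN α n q.1 q.2.1 q.2.2 ∧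
                |PhiFrac α n q.1 q.2.1 q.2.2 - (μ : ℝ)| < 1},
              ((ω₁ p.1.1 : ℝ≥0∞) * (ω₂ p.1.2.1 : ℝ≥0∞) * (ω₃ p.1.2.2 : ℝ≥0∞))) ^ 2) ^ (1/2 : ℝ)
          ≤ ENNReal.ofReal C * (l2sZ s₁ ω₁ * l2sZ s₁ ω₂ * l2sZ s₁ ω₃) := by
  obtain ⟨C, hC, h⟩ := fractional_NLS_B1_general α hα hα'.le s₁ hs₁.le
  refine ⟨C, hC, fun μ ω₁ ω₂ ω₃ ↦ le_trans ?_ (h μ ω₁ ω₂ ω₃)⟩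
  gcongr with n
  exact ENNReal.tsum_mono_subtype (fun q : ℤ × ℤ × ℤ ↦ (ω₁ q.1 : ℝ≥0∞) * ω₂ q.2.1 * ω₃ q.2.2)
    fun q hq ↦ ⟨hq.1.1, hq.2⟩
end

section
/- Fix α with 1/2 < α < 1 and let s₁ > (1−α)/2. Then there exists C > 0 such that for every μ ∈ ℤ, all nonnegative sequences ω⁽¹⁾, ω⁽²⁾, ω⁽³⁾ : ℤ → [0,∞), and every j ∈ {1,2,3}: sup_{n ∈ ℤ} Σ_{(n₁,n₂,n₃) ∈ Γ_n^N, |Φ − μ| < 1} ω⁽¹⁾_{n₁} ω⁽²⁾_{n₂} ω⁽³⁾_{n₃} ≤ C (sup_{m ∈ ℤ} ω⁽ʲ⁾_m) ∏_{l ∈ {1,2,3}, l ≠ j} ‖ω⁽ˡ⁾‖_{ℓ²_{s₁}}. -/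
open scoped ENNReal NNReal

/-!
On `[-R, R]` the function `|t|^{2α}` is strongly convex with modulus of order `R^{2α-2}`. Fix `n`
and one of `n₁, n₂, n₃`; the condition `|Φ - μ| < 1` then confines a function of one free frequency
`u` to a window of length `2`. If `n₂` is fixed, this function is
`|u|^{2α} + |u - d|^{2α}`, and strong convexity leaves `O(N^{1-α})` integers `|u| ≤ N`. If `n₁` or
`n₃` is fixed, it is the difference `|u + k|^{2α} - |u|^{2α}`, which expands distances because
membership in `Γ_n^N` makes the shift `k` large compared with `|n₂|^{1-α}`; the count is again
`O(N^{1-α})`. Since `2 s₁ > 1 - α`, the weights `⟨u⟩^{-2 s₁}` are summable over such sparse sets, by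
dyadic decomposition, and Schur's test gives the trilinear estimate.
-/

namespace FractionalNLS

section Convexity

variable {p R : ℝ}

lemma hasDerivAt_rpow_sub_sq {x : ℝ} (hx : 0 < x) (p m : ℝ) :
    HasDerivAt (fun t : ℝ => t ^ p - m / 2 * t ^ 2) (p * x ^ (p - 1) - m * x) x := by
  have hrpow := Real.hasDerivAt_rpow_const (p := p) (Or.inl hx.ne')
  have hsq := (hasDerivAt_pow 2 x).const_mul (m / 2)
  exact (hrpow.sub hsq).congr_deriv (by push_cast; ring)

lemma hasDerivAt_mul_rpow_sub_mul {x : ℝ} (hx : 0 < x) (p m : ℝ) :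
    HasDerivAt (fun t : ℝ => p * t ^ (p - 1) - m * t) (p * (p - 1) * x ^ (p - 2) - m) x := by
  have hrpow := (Real.hasDerivAt_rpow_const (p := p - 1) (Or.inl hx.ne')).const_mul p
  have hlin := (hasDerivAt_id x).const_mul m
  refine (hrpow.sub hlin).congr_deriv ?_
  rw [show p - 1 - 1 = p - 2 by ring]
  ring

lemma second_deriv_rpow_antitone (hp : 1 ≤ p) (hp' : p ≤ 2) {x : ℝ} (hx : x ∈ Set.Ioo 0 R) :
    p * (p - 1) * R ^ (p - 2) ≤ p * (p - 1) * x ^ (p - 2) :=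
  mul_le_mul_of_nonneg_left (Real.rpow_le_rpow_of_nonpos hx.1 hx.2.le (by linarith))
    (mul_nonneg (by linarith) (by linarith))

lemma continuousOn_rpow_sub_sq (hp : 0 ≤ p) (m : ℝ) (s : Set ℝ) :
    ContinuousOn (fun t : ℝ => t ^ p - m / 2 * t ^ 2) s :=
  ((Real.continuous_rpow_const hp).sub (by fun_prop)).continuousOn

lemma convexOn_rpow_sub_sq (hp : 1 ≤ p) (hp' : p ≤ 2) :
    ConvexOn ℝ (Set.Icc 0 R) fun t : ℝ => t ^ p - p * (p - 1) * R ^ (p - 2) / 2 * t ^ 2 := by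
  refine convexOn_of_hasDerivWithinAt2_nonneg (convex_Icc 0 R)
    (continuousOn_rpow_sub_sq (by linarith) _ _)
    (fun x hx => (hasDerivAt_rpow_sub_sq ?_ p _).hasDerivWithinAt)
    (fun x hx => (hasDerivAt_mul_rpow_sub_mul ?_ p _).hasDerivWithinAt)
    fun x hx => ?_ <;> rw [interior_Icc] at hx
  · exact hx.1
  · exact hx.1
  · exact sub_nonneg.mpr (second_deriv_rpow_antitone hp hp' hx)

lemma monotoneOn_rpow_sub_sq (hp : 1 ≤ p) (hp' : p ≤ 2) :
    MonotoneOn (fun t : ℝ => t ^ p - p * (p - 1) * R ^ (p - 2) / 2 * t ^ 2) (Set.Icc 0 R) := by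
  refine monotoneOn_of_hasDerivWithinAt_nonneg (convex_Icc 0 R)
    (continuousOn_rpow_sub_sq (by linarith) _ _)
    (fun x hx => (hasDerivAt_rpow_sub_sq ?_ p _).hasDerivWithinAt)
    fun x hx => ?_ <;> rw [interior_Icc] at hx
  · exact hx.1
  rw [sub_nonneg]
  calc p * (p - 1) * R ^ (p - 2) * x
      ≤ p * (p - 1) * x ^ (p - 2) * x :=
        mul_le_mul_of_nonneg_right (second_deriv_rpow_antitone hp hp' hx) hx.1.le
    _ = (p - 1) * (p * x ^ (p - 1)) := by
        rw [show p - 1 = p - 2 + 1 by ring, Real.rpow_add_one hx.1.ne']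
        ring
    _ ≤ p * x ^ (p - 1) :=
        mul_le_of_le_one_left (mul_nonneg (by linarith) (Real.rpow_nonneg hx.1.le _)) (by linarith)

lemma strongConvexOn_abs_rpow (hp : 1 ≤ p) (hp' : p ≤ 2) (R : ℝ) :
    StrongConvexOn (Set.Icc (-R) R) (p * (p - 1) * R ^ (p - 2)) fun t : ℝ => |t| ^ p := by
  have himage : (fun t : ℝ => |t|) '' Set.Icc (-R) R = Set.Icc 0 R := by
    ext r
    constructor
    · rintro ⟨t, ht, rfl⟩
      exact ⟨abs_nonneg t, abs_le.mpr ht⟩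
    · exact fun hr => ⟨r, ⟨by linarith [hr.1, hr.2], hr.2⟩, abs_of_nonneg hr.1⟩
  rw [strongConvexOn_iff_convex]
  exact ConvexOn.comp (f := fun t : ℝ => |t|) (by rw [himage]; exact convexOn_rpow_sub_sq hp hp')
    (convexOn_norm (convex_Icc _ _)) (by rw [himage]; exact monotoneOn_rpow_sub_sq hp hp')

lemma convexOn_abs_sub_rpow (hp : 1 ≤ p) (d : ℝ) :
    ConvexOn ℝ Set.univ fun t : ℝ => |t - d| ^ p := by
  have himage : (fun t : ℝ => |t - d|) '' Set.univ = Set.Ici 0 := by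
    ext r
    constructor
    · rintro ⟨t, -, rfl⟩
      exact abs_nonneg (t - d)
    · exact fun hr => ⟨r + d, trivial, by simpa using hr⟩
  refine ConvexOn.comp (f := fun t : ℝ => |t - d|) (g := fun t => t ^ p) ?_
    (convexOn_univ_dist d) ?_ <;> rw [himage]
  · exact convexOn_rpow hp
  · exact Real.monotoneOn_rpow_Ici_of_exponent_nonneg (by linarith)

variable {s : Set ℝ} {m : ℝ} {f : ℝ → ℝ}

lemma strongConvexOn_add_convexOn {g : ℝ → ℝ} (hf : StrongConvexOn s m f) (hg : ConvexOn ℝ s g) :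
    StrongConvexOn s m (f + g) := by
  rw [StrongConvexOn, ← add_zero (fun r : ℝ => m / 2 * r ^ 2)]
  exact UniformConvexOn.add hf (uniformConvexOn_zero.mpr hg)

lemma strongConvexOn_three_point (hf : StrongConvexOn s m f) {x y z : ℝ} (hx : x ∈ s) (hz : z ∈ s)
    (hxy : x ≤ y) (hyz : y ≤ z) :
    (z - x) * f y + m / 2 * ((y - x) * (z - y) * (z - x)) ≤ (z - y) * f x + (y - x) * f z := by
  rcases (hxy.trans hyz).eq_or_lt with rfl | hxz
  · obtain rfl := le_antisymm hxy hyz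
    simp
  have hpos : 0 < z - x := sub_pos.mpr hxz
  have hconv := hf.2 hx hz (div_nonneg (sub_nonneg.mpr hyz) hpos.le)
    (div_nonneg (sub_nonneg.mpr hxy) hpos.le) (by field_simp; ring)
  have hy : ((z - y) / (z - x)) • x + ((y - x) / (z - x)) • z = y := by
    simp only [smul_eq_mul]
    field_simp
    ring
  rw [hy] at hconv
  simp only [smul_eq_mul, Real.norm_eq_abs, sq_abs] at hconv
  have hscaled := mul_le_mul_of_nonneg_left hconv hpos.le
  have hclear : (z - x) * ((z - y) / (z - x) * f x + (y - x) / (z - x) * f z -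
      (z - y) / (z - x) * ((y - x) / (z - x)) * (m / 2 * (x - z) ^ 2)) =
      (z - y) * f x + (y - x) * f z - m / 2 * ((y - x) * (z - y) * (z - x)) := by
    field_simp
    ring
  linarith

lemma strongConvexOn_second_difference (hf : StrongConvexOn s m f) {x a b : ℝ} (hx : x ∈ s)
    (hxab : x + a + b ∈ s) (ha : 0 ≤ a) (hb : 0 ≤ b) :
    f (x + a) + f (x + b) + m * (a * b) ≤ f x + f (x + a + b) := by
  rcases (add_nonneg ha hb).eq_or_lt with hab | hab
  · obtain rfl : a = 0 := by linarith
    obtain rfl : b = 0 := by linarith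
    simp
  have h₁ := strongConvexOn_three_point hf hx hxab (y := x + a) (by linarith) (by linarith)
  have h₂ := strongConvexOn_three_point hf hx hxab (y := x + b) (by linarith) (by linarith)
  refine le_of_mul_le_mul_left ?_ hab
  linear_combination h₁ + h₂

/-- Only the first `b` units of the shift `k` see the strong convexity; for the rest, where the
arguments may leave `s`, plain convexity suffices. -/
lemma mul_le_sub_of_strongConvexOn (hf : StrongConvexOn s m f) (hf' : ConvexOn ℝ Set.univ f)
    {x y b k : ℝ} (hxy : x ≤ y) (hb : 0 ≤ b) (hbk : b ≤ k) (hx : x ∈ s) (hyb : y + b ∈ s) :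
    m * b * (y - x) ≤ (f (y + k) - f y) - (f (x + k) - f x) := by
  have hnear := strongConvexOn_second_difference hf hx (a := y - x) (b := b)
    (by rwa [add_sub_cancel]) (by linarith) hb
  have hfar := strongConvexOn_second_difference (strongConvexOn_zero.mpr hf')
    (x := x + b) (a := y - x) (b := k - b) trivial trivial (by linarith) (by linarith)
  rw [add_sub_cancel] at hnear
  rw [show x + b + (y - x) + (k - b) = y + k by ring, show x + b + (y - x) = y + b by ring,
    show x + b + (k - b) = x + k by ring] at hfar
  linarith

end Convexity

section Counting

lemma card_le_of_sub_le {F : Finset ℤ} {L : ℝ} (hL : 0 ≤ L)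
    (hF : ∀ u ∈ F, ∀ v ∈ F, (v : ℝ) - u ≤ L) : (F.card : ℝ) ≤ L + 1 := by
  rcases F.eq_empty_or_nonempty with rfl | hne
  · simpa using by linarith
  have hsub : F ⊆ Finset.Icc (F.min' hne) (F.max' hne) := fun u hu =>
    Finset.mem_Icc.mpr ⟨F.min'_le u hu, F.le_max' u hu⟩
  have hcard : (F.card : ℤ) ≤ F.max' hne - F.min' hne + 1 := by
    have := Finset.card_le_card hsub
    have := F.min'_le_max' hne
    rw [Int.card_Icc] at *
    omega
  calc (F.card : ℝ) ≤ F.max' hne - F.min' hne + 1 := by exact_mod_cast hcard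
    _ ≤ L + 1 := by gcongr; exact hF _ (F.min'_mem hne) _ (F.max'_mem hne)

lemma card_le_of_mul_gaps_le {F : Finset ℤ} {L : ℝ}
    (hF : ∀ u ∈ F, ∀ v ∈ F, ∀ w ∈ F, u ≤ v → v ≤ w → ((v : ℝ) - u) * (w - v) ≤ L) :
    (F.card : ℝ) ≤ 2 * (√L + 1) := by
  rcases F.eq_empty_or_nonempty with rfl | hne
  · simpa using by positivity
  set lo := F.min' hne
  set hi := F.max' hne
  have hlo : lo ∈ F := F.min'_mem hne
  have hhi : hi ∈ F := F.max'_mem hne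
  have hL : 0 ≤ L := by simpa using hF lo hlo lo hlo lo hlo le_rfl le_rfl
  let left : Finset ℤ := {v ∈ F | (v : ℝ) - lo ≤ √L}
  let right : Finset ℤ := {v ∈ F | (hi : ℝ) - v ≤ √L}
  have hcover : F ⊆ left ∪ right := by
    intro v hv
    rw [Finset.mem_union, Finset.mem_filter, Finset.mem_filter]
    by_contra! hfar
    have hprod := hF lo hlo v hv hi hhi (F.min'_le v hv) (F.le_max' v hv)
    have hlt := mul_lt_mul'' (hfar.1 hv) (hfar.2 hv) (Real.sqrt_nonneg L) (Real.sqrt_nonneg L)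
    rw [Real.mul_self_sqrt hL] at hlt
    exact hprod.not_gt hlt
  have hleft : (left.card : ℝ) ≤ √L + 1 :=
    card_le_of_sub_le (Real.sqrt_nonneg L) fun u hu v hv => by
      have : (lo : ℝ) ≤ u := by exact_mod_cast F.min'_le u (Finset.mem_filter.mp hu).1
      linarith [(Finset.mem_filter.mp hv).2]
  have hright : (right.card : ℝ) ≤ √L + 1 :=
    card_le_of_sub_le (Real.sqrt_nonneg L) fun u hu v hv => by
      have : (v : ℝ) ≤ hi := by exact_mod_cast F.le_max' v (Finset.mem_filter.mp hv).1
      linarith [(Finset.mem_filter.mp hu).2]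
  have hunion : (F.card : ℝ) ≤ left.card + right.card := by
    exact_mod_cast (Finset.card_le_card hcover).trans (Finset.card_union_le _ _)
  linarith

lemma card_le_of_strongConvexOn {f : ℝ → ℝ} {s : Set ℝ} {m c r : ℝ} (hf : StrongConvexOn s m f)
    (hm : 0 < m) {F : Finset ℤ} (hFs : ∀ u ∈ F, (u : ℝ) ∈ s) (hFc : ∀ u ∈ F, |f u - c| < r) :
    (F.card : ℝ) ≤ 2 * (√(4 * r / m) + 1) := by
  refine card_le_of_mul_gaps_le fun u hu v hv w hw huv hvw => ?_
  have huv' : (u : ℝ) ≤ v := by exact_mod_cast huv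
  have hvw' : (v : ℝ) ≤ w := by exact_mod_cast hvw
  have hcu := abs_lt.mp (hFc u hu)
  have hcv := abs_lt.mp (hFc v hv)
  have hcw := abs_lt.mp (hFc w hw)
  rcases (huv'.trans hvw').eq_or_lt with huw | huw
  · rw [show (v : ℝ) - u = 0 by linarith, zero_mul]
    exact div_nonneg (by linarith) hm.le
  have hthree := strongConvexOn_three_point hf (hFs u hu) (hFs w hw) huv' hvw'
  have hleft : (w - v : ℝ) * f u ≤ (w - v) * (f v + 2 * r) :=
    mul_le_mul_of_nonneg_left (by linarith) (by linarith)
  have hright : (v - u : ℝ) * f w ≤ (v - u) * (f v + 2 * r) :=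
    mul_le_mul_of_nonneg_left (by linarith) (by linarith)
  rw [le_div_iff₀ hm]
  refine le_of_mul_le_mul_right ?_ (sub_pos.mpr huw)
  linear_combination 2 * hthree + 2 * hleft + 2 * hright

end Counting

section Growth

/-- `A ⊆ ℤ` has at most `C N^β` elements in `[-N, N]`, for every real `N ≥ 1`. Counting through
finite subsets of `A ∩ [-N, N]` avoids the junk value of `Set.ncard`. -/
def HasGrowthLE (C β : ℝ) (A : Set ℤ) : Prop :=
  ∀ N : ℝ, 1 ≤ N → ∀ F : Finset ℤ, (∀ u ∈ F, u ∈ A) → (∀ u ∈ F, |(u : ℝ)| ≤ N) →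
    (F.card : ℝ) ≤ C * N ^ β

namespace HasGrowthLE

variable {C β : ℝ} {A B : Set ℤ}

lemma mono (hB : HasGrowthLE C β B) (hAB : A ⊆ B) : HasGrowthLE C β A :=
  fun N hN F hFA hFN => hB N hN F (fun u hu => hAB (hFA u hu)) hFN

lemma const_nonneg (hA : HasGrowthLE C β A) : 0 ≤ C := by
  simpa using hA 1 le_rfl ∅ (by simp) (by simp)

lemma tsum_ite_abs_le (hA : HasGrowthLE C β A) {N : ℝ} (hN : 1 ≤ N) (c : ℝ≥0∞) :
    ∑' a : A, (if |((a : ℤ) : ℝ)| ≤ N then c else 0) ≤ ENNReal.ofReal (C * N ^ β) * c := by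
  rw [ENNReal.tsum_eq_iSup_sum]
  refine iSup_le fun G => ?_
  let H : Finset ℤ :=
    (G.filter fun a : A => |((a : ℤ) : ℝ)| ≤ N).map (Function.Embedding.subtype _)
  have hcard : (H.card : ℝ) ≤ C * N ^ β := by
    refine hA N hN H (fun u hu => ?_) fun u hu => ?_ <;>
      obtain ⟨a, ha, rfl⟩ := Finset.mem_map.mp hu
    · exact a.2
    · exact (Finset.mem_filter.mp ha).2
  rw [← Finset.sum_filter, Finset.sum_const, nsmul_eq_mul, ← ENNReal.ofReal_natCast]
  rw [Finset.card_map] at hcard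
  gcongr

end HasGrowthLE

lemma one_le_jbZ (n : ℤ) : 1 ≤ jbZ n :=
  Real.one_le_sqrt.mpr (by nlinarith [sq_nonneg (n : ℝ)])

lemma abs_le_jbZ (n : ℤ) : |(n : ℝ)| ≤ jbZ n :=
  Real.le_sqrt_of_sq_le (by rw [sq_abs]; linarith)

lemma inv_jbZ_rpow_le_tsum {σ : ℝ} (hσ : 0 ≤ σ) (n : ℤ) :
    (ENNReal.ofReal (jbZ n ^ σ))⁻¹ ≤
      ∑' j : ℕ, if |(n : ℝ)| ≤ 2 ^ (j + 1) then (ENNReal.ofReal (((2 : ℝ) ^ j) ^ σ))⁻¹ else 0 := by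
  obtain ⟨j, hj, hj'⟩ := exists_nat_pow_near (one_le_jbZ n) one_lt_two
  refine le_trans ?_ (ENNReal.le_tsum j)
  rw [if_pos ((abs_le_jbZ n).trans hj'.le)]
  gcongr

lemma HasGrowthLE.tsum_inv_jbZ_rpow_le {C β σ : ℝ} {A : Set ℤ} (hA : HasGrowthLE C β A)
    (hσ : 0 ≤ σ) (hβσ : β < σ) :
    ∑' a : A, (ENNReal.ofReal (jbZ a ^ σ))⁻¹ ≤
      ENNReal.ofReal (C * 2 ^ β / (1 - 2 ^ (β - σ))) := by
  set r : ℝ := 2 ^ (β - σ)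
  have hr : r < 1 := Real.rpow_lt_one_of_one_lt_of_neg one_lt_two (by linarith)
  have hr₀ : 0 ≤ r := by positivity
  have hC := hA.const_nonneg
  have hshell (j : ℕ) : ENNReal.ofReal (C * (2 ^ (j + 1)) ^ β) *
      (ENNReal.ofReal (((2 : ℝ) ^ j) ^ σ))⁻¹ = ENNReal.ofReal (C * 2 ^ β * r ^ j) := by
    rw [← ENNReal.ofReal_inv_of_pos (by positivity), ← ENNReal.ofReal_mul (by positivity)]
    congr 1
    have hrj : r ^ j = ((2 : ℝ) ^ j) ^ β * (((2 : ℝ) ^ j) ^ σ)⁻¹ := by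
      rw [← Real.rpow_neg (by positivity), ← Real.rpow_add (by positivity), ← sub_eq_add_neg,
        Real.rpow_pow_comm zero_le_two]
    rw [hrj, pow_succ, Real.mul_rpow (by positivity) zero_le_two]
    ring
  calc ∑' a : A, (ENNReal.ofReal (jbZ a ^ σ))⁻¹
      ≤ ∑' (a : A) (j : ℕ), (if |((a : ℤ) : ℝ)| ≤ 2 ^ (j + 1) then
          (ENNReal.ofReal (((2 : ℝ) ^ j) ^ σ))⁻¹ else 0) :=
        ENNReal.tsum_le_tsum fun a => inv_jbZ_rpow_le_tsum hσ a
    _ = ∑' (j : ℕ) (a : A), (if |((a : ℤ) : ℝ)| ≤ 2 ^ (j + 1) then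
          (ENNReal.ofReal (((2 : ℝ) ^ j) ^ σ))⁻¹ else 0) := ENNReal.tsum_comm
    _ ≤ ∑' j : ℕ, ENNReal.ofReal (C * 2 ^ β * r ^ j) :=
        ENNReal.tsum_le_tsum fun j =>
          (hA.tsum_ite_abs_le (one_le_pow₀ one_le_two) _).trans_eq (hshell j)
    _ = ENNReal.ofReal (C * 2 ^ β / (1 - r)) := by
        rw [← ENNReal.ofReal_tsum_of_nonneg (fun j => by positivity)
          ((summable_geometric_of_lt_one hr₀ hr).mul_left _), tsum_mul_left,
          tsum_geometric_of_lt_one hr₀ hr, div_eq_mul_inv]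

end Growth

section Schur

variable {ι X Y : Type*}

lemma tsum_le_sqrt_mul_sqrt {a b c : ι → ℝ≥0∞} (h : ∀ i, c i ^ 2 ≤ a i * b i) :
    ∑' i, c i ≤ (∑' i, a i) ^ (1 / 2 : ℝ) * (∑' i, b i) ^ (1 / 2 : ℝ) := by
  have hsqrt (x : ℝ≥0∞) : (x ^ (1 / 2 : ℝ)) ^ (2 : ℝ) = x := by
    rw [← ENNReal.rpow_mul]
    norm_num
  have hc (i : ι) : c i ≤ a i ^ (1 / 2 : ℝ) * b i ^ (1 / 2 : ℝ) := by
    rw [← ENNReal.mul_rpow_of_nonneg _ _ (by norm_num), one_div, ENNReal.le_rpow_inv_iff two_pos,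
      ENNReal.rpow_two]
    exact h i
  rw [ENNReal.tsum_eq_iSup_sum]
  refine iSup_le fun G => ?_
  calc ∑ i ∈ G, c i
      ≤ ∑ i ∈ G, a i ^ (1 / 2 : ℝ) * b i ^ (1 / 2 : ℝ) := Finset.sum_le_sum fun i _ => hc i
    _ ≤ (∑ i ∈ G, a i) ^ (1 / 2 : ℝ) * (∑ i ∈ G, b i) ^ (1 / 2 : ℝ) := by
        simpa only [hsqrt] using ENNReal.inner_le_Lp_mul_Lq G (fun i => a i ^ (1 / 2 : ℝ))
          (fun i => b i ^ (1 / 2 : ℝ)) Real.HolderConjugate.two_two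
    _ ≤ _ := by gcongr <;> exact ENNReal.sum_le_tsum G

lemma tsum_comp_mul_le_of_fiberwise {x : ι → X} {G : ι → ℝ≥0∞} {K : ℝ≥0∞}
    (hG : ∀ a, ∑' i : x ⁻¹' {a}, G i ≤ K) (F : X → ℝ≥0∞) :
    ∑' i, F (x i) * G i ≤ K * ∑' a, F a := by
  rw [← ENNReal.tsum_fiberwise _ x, ← ENNReal.tsum_mul_left]
  refine ENNReal.tsum_le_tsum fun a => ?_
  have hfiber (i : x ⁻¹' {a}) : F (x i) * G i = F a * G i := by rw [show x i = a from i.2]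
  rw [tsum_congr hfiber, ENNReal.tsum_mul_left, mul_comm]
  gcongr
  exact hG a

/-- Schur's test. -/
lemma tsum_comp_mul_comp_le_of_fiberwise {x : ι → X} {y : ι → Y} {w : X → ℝ≥0∞} {v : Y → ℝ≥0∞}
    {K : ℝ≥0∞} (hw : ∀ a, w a ≠ 0 ∧ w a ≠ ∞) (hv : ∀ b, v b ≠ 0 ∧ v b ≠ ∞)
    (hx : ∀ a, ∑' i : x ⁻¹' {a}, (v (y i))⁻¹ ≤ K) (hy : ∀ b, ∑' i : y ⁻¹' {b}, (w (x i))⁻¹ ≤ K)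
    (f : X → ℝ≥0∞) (g : Y → ℝ≥0∞) :
    ∑' i, f (x i) * g (y i) ≤
      K * ((∑' a, w a * f a ^ 2) ^ (1 / 2 : ℝ) * (∑' b, v b * g b ^ 2) ^ (1 / 2 : ℝ)) := by
  have hsplit (i : ι) : (f (x i) * g (y i)) ^ 2 =
      w (x i) * f (x i) ^ 2 * (v (y i))⁻¹ * (v (y i) * g (y i) ^ 2 * (w (x i))⁻¹) := by
    calc (f (x i) * g (y i)) ^ 2
        = w (x i) * (w (x i))⁻¹ * (v (y i) * (v (y i))⁻¹) * (f (x i) * g (y i)) ^ 2 := by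
          rw [ENNReal.mul_inv_cancel (hw _).1 (hw _).2, ENNReal.mul_inv_cancel (hv _).1 (hv _).2,
            one_mul, one_mul]
      _ = _ := by ring
  calc ∑' i, f (x i) * g (y i)
      ≤ (∑' i, w (x i) * f (x i) ^ 2 * (v (y i))⁻¹) ^ (1 / 2 : ℝ) *
          (∑' i, v (y i) * g (y i) ^ 2 * (w (x i))⁻¹) ^ (1 / 2 : ℝ) :=
        tsum_le_sqrt_mul_sqrt fun i => (hsplit i).le
    _ ≤ (K * ∑' a, w a * f a ^ 2) ^ (1 / 2 : ℝ) * (K * ∑' b, v b * g b ^ 2) ^ (1 / 2 : ℝ) := by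
        gcongr
        · exact tsum_comp_mul_le_of_fiberwise hx fun a => w a * f a ^ 2
        · exact tsum_comp_mul_le_of_fiberwise hy fun b => v b * g b ^ 2
    _ = K * ((∑' a, w a * f a ^ 2) ^ (1 / 2 : ℝ) * (∑' b, v b * g b ^ 2) ^ (1 / 2 : ℝ)) := by
        have hK : K ^ (1 / 2 : ℝ) * K ^ (1 / 2 : ℝ) = K := by
          rw [← ENNReal.rpow_add_of_nonneg _ _ (by norm_num) (by norm_num)]
          norm_num
        rw [ENNReal.mul_rpow_of_nonneg _ _ (by norm_num),
          ENNReal.mul_rpow_of_nonneg _ _ (by norm_num), mul_mul_mul_comm, hK]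

variable {C β s : ℝ} {x y : ι → ℤ}

lemma tsum_fiber_inv_jbZ_rpow_le (hxy : Function.Injective fun i => (x i, y i)) {A : ℤ → Set ℤ}
    (hA : ∀ a, HasGrowthLE C β (A a)) (hyA : ∀ i, y i ∈ A (x i)) (hs : 0 ≤ s) (hβs : β < 2 * s)
    (a : ℤ) :
    ∑' i : x ⁻¹' {a}, (ENNReal.ofReal (jbZ (y i) ^ (2 * s)))⁻¹ ≤
      ENNReal.ofReal (C * 2 ^ β / (1 - 2 ^ (β - 2 * s))) := by
  let toA (i : x ⁻¹' {a}) : A a := ⟨y i, (congrArg A i.2 : A (x i) = A a) ▸ hyA i⟩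
  have htoA : Function.Injective toA := fun i i' h =>
    Subtype.ext (hxy (Prod.ext (i.2.trans i'.2.symm) (congrArg Subtype.val h)))
  exact (ENNReal.tsum_comp_le_tsum_of_injective htoA
    fun b => (ENNReal.ofReal (jbZ b ^ (2 * s)))⁻¹).trans
      ((hA a).tsum_inv_jbZ_rpow_le (by linarith) hβs)

lemma tsum_comp_mul_comp_le_l2sZ (hxy : Function.Injective fun i => (x i, y i)) {A B : ℤ → Set ℤ}
    (hA : ∀ a, HasGrowthLE C β (A a)) (hyA : ∀ i, y i ∈ A (x i))
    (hB : ∀ b, HasGrowthLE C β (B b)) (hxB : ∀ i, x i ∈ B (y i))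
    (hs : 0 ≤ s) (hβs : β < 2 * s) (u v : ℤ → ℝ≥0) :
    ∑' i, (u (x i) : ℝ≥0∞) * v (y i) ≤
      ENNReal.ofReal (C * 2 ^ β / (1 - 2 ^ (β - 2 * s))) * (l2sZ s u * l2sZ s v) := by
  have hweight (n : ℤ) :
      ENNReal.ofReal (jbZ n ^ (2 * s)) ≠ 0 ∧ ENNReal.ofReal (jbZ n ^ (2 * s)) ≠ ∞ :=
    ⟨(ENNReal.ofReal_pos.mpr (Real.rpow_pos_of_pos (one_pos.trans_le (one_le_jbZ n)) _)).ne',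
      ENNReal.ofReal_ne_top⟩
  have hyx : Function.Injective fun i => (y i, x i) := Prod.swap_injective.comp hxy
  exact tsum_comp_mul_comp_le_of_fiberwise hweight hweight
    (tsum_fiber_inv_jbZ_rpow_le hxy hA hyA hs hβs) (tsum_fiber_inv_jbZ_rpow_le hyx hB hxB hs hβs)
    (fun n => u n) (fun n => v n)

lemma tsum_comp_mul_le_iSup_mul (f : X → ℝ≥0∞) (z : ι → X) (g : ι → ℝ≥0∞) :
    ∑' i, f (z i) * g i ≤ (⨆ a, f a) * ∑' i, g i := by
  rw [← ENNReal.tsum_mul_left]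
  gcongr
  exact le_iSup f _

end Schur

section Dispersion

variable {α : ℝ}

/-- The constant `κ` for which `|t|^{2α}` is strongly convex on `[-3M, 3M]` with modulus
`κ M^{2α-2}`. The room `3M` accommodates a frequency of size `2M` shifted by at most `M`. -/
noncomputable def curvature (α : ℝ) : ℝ := 2 * α * (2 * α - 1) * 3 ^ (2 * α - 2)

lemma curvature_pos (hα : 1 / 2 < α) : 0 < curvature α :=
  mul_pos (mul_pos (by linarith) (by linarith)) (by positivity)

lemma strongConvexOn_abs_rpow_two_mul (hα : 1 / 2 ≤ α) (hα' : α ≤ 1) {M : ℝ} (hM : 0 < M) :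
    StrongConvexOn (Set.Icc (-(3 * M)) (3 * M)) (curvature α / (M ^ (1 - α)) ^ 2)
      fun t : ℝ => |t| ^ (2 * α) := by
  have hmodulus : 2 * α * (2 * α - 1) * (3 * M) ^ (2 * α - 2) =
      curvature α / (M ^ (1 - α)) ^ 2 := by
    rw [curvature, Real.mul_rpow (by norm_num) hM.le, ← Real.rpow_mul_natCast hM.le,
      div_eq_mul_inv, ← Real.rpow_neg hM.le, ← mul_assoc]
    congr 2
    push_cast
    ring
  exact hmodulus ▸ strongConvexOn_abs_rpow (by linarith) (by linarith) (3 * M)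

/-- The constant in the fibre counts: at most `growthConst α * N^{1-α}` frequencies in
`[-N, N]`. -/
noncomputable def growthConst (α : ℝ) : ℝ := 4 / curvature α + 3

lemma hasGrowthLE_abs_rpow_add_abs_sub_rpow (hα : 1 / 2 < α) (hα' : α ≤ 1) (d c : ℝ) :
    HasGrowthLE (growthConst α) (1 - α)
      {u : ℤ | |(|(u : ℝ)| ^ (2 * α) + |(u : ℝ) - d| ^ (2 * α)) - c| < 1} := by
  intro N hN F hF hFN
  set b := N ^ (1 - α)
  have hb : 1 ≤ b := Real.one_le_rpow hN (by linarith)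
  have hκ := curvature_pos hα
  have habs : ConvexOn ℝ Set.univ fun t : ℝ => |t - d| ^ (2 * α) :=
    convexOn_abs_sub_rpow (by linarith) d
  have hconv : StrongConvexOn (Set.Icc (-(3 * N)) (3 * N)) (curvature α / b ^ 2)
      ((fun t : ℝ => |t| ^ (2 * α)) + fun t : ℝ => |t - d| ^ (2 * α)) :=
    strongConvexOn_add_convexOn (strongConvexOn_abs_rpow_two_mul hα.le hα' (by linarith))
      (habs.subset (Set.subset_univ _) (convex_Icc _ _))
  have hcard := card_le_of_strongConvexOn hconv (by positivity)
    (fun u hu => abs_le.mp ((hFN u hu).trans (by linarith))) hF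
  have hsqrt : √(4 * 1 / (curvature α / b ^ 2)) = √(4 / curvature α) * b := by
    rw [show 4 * 1 / (curvature α / b ^ 2) = 4 / curvature α * b ^ 2 by field_simp,
      Real.sqrt_mul (by positivity), Real.sqrt_sq (by linarith)]
  have hamgm : 2 * √(4 / curvature α) ≤ 4 / curvature α + 1 := by
    have := Real.sq_sqrt (show 0 ≤ 4 / curvature α by positivity)
    nlinarith [sq_nonneg (√(4 / curvature α) - 1)]
  calc (F.card : ℝ) ≤ 2 * (√(4 / curvature α) * b + 1) := hsqrt ▸ hcard
    _ ≤ (4 / curvature α + 1) * b + 2 * b := by nlinarith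
    _ = growthConst α * b := by rw [growthConst]; ring

/-- Either disjunct confines `u` to the scale `|k|^{1/γ}`, so that `M = min N (|k|^{1/γ})` works up
to the factor `2`. -/
lemma exists_scale {γ N k : ℝ} (hγ : 0 ≤ γ) (hγ' : γ ≤ 1) (hN : 1 ≤ N) (hk : 1 ≤ |k|) :
    ∃ M, 1 ≤ M ∧ M ≤ N ∧ M ^ γ ≤ |k| ∧
      ∀ u : ℝ, |u| ≤ N → (|u| ^ γ < |k| ∨ |u + k| ^ γ < |k|) → |u| ≤ 2 * M := by
  rcases le_or_gt (N ^ γ) |k| with hNk | hNk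
  · exact ⟨N, hN, le_rfl, hNk, fun u hu _ => by linarith⟩
  have hγpos : 0 < γ := by
    refine hγ.lt_of_ne ?_
    rintro rfl
    rw [Real.rpow_zero] at hNk
    linarith
  have hkM : |k| ≤ |k| ^ γ⁻¹ := Real.self_le_rpow_of_one_le hk (one_le_inv_iff₀.mpr ⟨hγpos, hγ'⟩)
  refine ⟨|k| ^ γ⁻¹, hk.trans hkM, ?_, (Real.rpow_inv_rpow (abs_nonneg k) hγpos.ne').le, ?_⟩
  · exact ((Real.rpow_inv_lt_iff_of_pos (abs_nonneg k) (by linarith) hγpos).mpr hNk).le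
  rintro u - (hu | hu) <;>
    have huM := (Real.lt_rpow_inv_iff_of_pos (abs_nonneg _) (abs_nonneg k) hγpos).mpr hu
  · linarith
  · have := abs_sub (u + k) k
    rw [add_sub_cancel_right] at this
    linarith

lemma mul_abs_sub_le_abs_difference (hα : 1 / 2 ≤ α) (hα' : α ≤ 1) {M k x y : ℝ} (hM : 1 ≤ M)
    (hMk : M ^ (1 - α) ≤ |k|) (hx : |x| ≤ 2 * M) (hy : |y| ≤ 2 * M) :
    curvature α / M ^ (1 - α) * |x - y| ≤
      |(|x + k| ^ (2 * α) - |x| ^ (2 * α)) - (|y + k| ^ (2 * α) - |y| ^ (2 * α))| := by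
  wlog hk : 0 ≤ k generalizing k x y
  · have hneg := this (k := -k) (x := -x) (y := -y) (by rwa [abs_neg]) (by rwa [abs_neg])
      (by rwa [abs_neg]) (by linarith)
    rwa [← neg_add, ← neg_add, abs_neg, abs_neg, abs_neg, abs_neg, ← neg_sub', abs_neg] at hneg
  wlog hxy : x ≤ y generalizing x y
  · rw [abs_sub_comm x, abs_sub_comm (_ - _)]
    exact this hy hx (le_of_not_ge hxy)
  rw [abs_of_nonneg hk] at hMk
  have hb : M ^ (1 - α) ≤ M := Real.rpow_le_self_of_one_le hM (by linarith)
  have hbpos : 0 < M ^ (1 - α) := by positivity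
  have hexpand := mul_le_sub_of_strongConvexOn
    (strongConvexOn_abs_rpow_two_mul hα hα' (by linarith : 0 < M))
    (by simpa only [sub_zero] using convexOn_abs_sub_rpow (by linarith : 1 ≤ 2 * α) 0)
    hxy hbpos.le hMk
    ⟨by linarith [(abs_le.mp hx).1], by linarith [(abs_le.mp hx).2]⟩
    ⟨by linarith [(abs_le.mp hy).1], by linarith [(abs_le.mp hy).2]⟩
  rw [abs_sub_comm x, abs_sub_comm (_ - _), abs_of_nonneg (sub_nonneg.mpr hxy)]
  calc curvature α / M ^ (1 - α) * (y - x)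
      = curvature α / (M ^ (1 - α)) ^ 2 * M ^ (1 - α) * (y - x) := by field_simp
    _ ≤ _ := hexpand.trans (le_abs_self _)

lemma hasGrowthLE_abs_add_rpow_sub_abs_rpow (hα : 1 / 2 < α) (hα' : α ≤ 1) (k : ℤ) (c : ℝ) :
    HasGrowthLE (growthConst α) (1 - α)
      {u : ℤ | (|(u : ℝ)| ^ (1 - α) < |(k : ℝ)| ∨ |(u : ℝ) + k| ^ (1 - α) < |(k : ℝ)|) ∧
        |(|(u : ℝ) + k| ^ (2 * α) - |(u : ℝ)| ^ (2 * α)) - c| < 1} := by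
  intro N hN F hF hFN
  have hκ := curvature_pos hα
  rcases eq_or_ne k 0 with rfl | hk
  · have hempty : F = ∅ := Finset.eq_empty_of_forall_notMem fun u hu => by
      have hnonneg : 0 ≤ |(u : ℝ)| ^ (1 - α) := by positivity
      simpa [hnonneg.not_gt] using (hF u hu).1
    rw [hempty, Finset.card_empty, Nat.cast_zero, growthConst]
    positivity
  obtain ⟨M, hM, hMN, hMk, hscale⟩ := exists_scale (γ := 1 - α) (k := k) (by linarith)
    (by linarith) hN (by exact_mod_cast Int.one_le_abs hk)
  have hspread : (F.card : ℝ) ≤ 2 * M ^ (1 - α) / curvature α + 1 := by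
    refine card_le_of_sub_le (by positivity) fun u hu v hv => ?_
    have hexpand := mul_abs_sub_le_abs_difference hα.le hα' hM hMk
      (hscale v (hFN v hv) (hF v hv).1) (hscale u (hFN u hu) (hF u hu).1)
    have hwindow := (hexpand.trans (abs_sub_le _ c _)).trans
      (add_le_add (hF v hv).2.le (abs_sub_comm c _ ▸ (hF u hu).2.le))
    rw [div_mul_eq_mul_div, div_le_iff₀ (by positivity)] at hwindow
    rw [le_div_iff₀ hκ]
    nlinarith [le_abs_self ((v : ℝ) - u)]
  have hMN' : M ^ (1 - α) ≤ N ^ (1 - α) := Real.rpow_le_rpow (by linarith) hMN (by linarith)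
  have hN' : 1 ≤ N ^ (1 - α) := Real.one_le_rpow hN (by linarith)
  calc (F.card : ℝ) ≤ 2 * M ^ (1 - α) / curvature α + 1 := hspread
    _ ≤ 4 * N ^ (1 - α) / curvature α + 3 * N ^ (1 - α) := by gcongr <;> linarith
    _ = growthConst α * N ^ (1 - α) := by rw [growthConst]; ring

end Dispersion

section Resonance

variable {α μ : ℝ} {n : ℤ}

/-- The frequencies `(n₁, n₂, n₃) ∈ Γ_n^N` with `|Φ - μ| < 1`. -/
def resonantSet (α μ : ℝ) (n : ℤ) : Set (ℤ × ℤ × ℤ) :=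
  {q | GammaN α n q.1 q.2.1 q.2.2 ∧ |PhiFrac α n q.1 q.2.1 q.2.2 - μ| < 1}

/-- The `n`-th coefficient of the trilinear form restricted to `resonantSet`. -/
noncomputable def resonantSum (α μ : ℝ) (n : ℤ) (ω₁ ω₂ ω₃ : ℤ → ℝ≥0) : ℝ≥0∞ :=
  ∑' p : resonantSet α μ n, (ω₁ p.1.1 : ℝ≥0∞) * (ω₂ p.1.2.1 : ℝ≥0∞) * (ω₃ p.1.2.2 : ℝ≥0∞)

lemma mem_resonantSet_iff {a b c : ℤ} :
    (a, b, c) ∈ resonantSet α μ n ↔ a - b + c = n ∧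
      |(b : ℝ)| ^ (1 - α) < |(b : ℝ) - a| ∧ |(b : ℝ)| ^ (1 - α) < |(b : ℝ) - c| ∧
      |(|(n : ℝ)| ^ (2 * α) - |(a : ℝ)| ^ (2 * α) + |(b : ℝ)| ^ (2 * α) - |(c : ℝ)| ^ (2 * α)) - μ|
        < 1 := by
  simp only [resonantSet, Set.mem_ofPred_eq, GammaN, PhiFrac, gt_iff_lt, and_assoc]

lemma mem_resonantSet_swap {a b c : ℤ} (h : (a, b, c) ∈ resonantSet α μ n) :
    (c, b, a) ∈ resonantSet α μ n := by
  obtain ⟨hsum, hba, hbc, hΦ⟩ := mem_resonantSet_iff.mp h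
  refine mem_resonantSet_iff.mpr ⟨by linarith, hbc, hba, ?_⟩
  convert hΦ using 3
  ring

lemma resonantSum_comm (ω₁ ω₂ ω₃ : ℤ → ℝ≥0) :
    resonantSum α μ n ω₁ ω₂ ω₃ = resonantSum α μ n ω₃ ω₂ ω₁ := by
  let swap : resonantSet α μ n ≃ resonantSet α μ n :=
    { toFun := fun p => ⟨(p.1.2.2, p.1.2.1, p.1.1), mem_resonantSet_swap p.2⟩
      invFun := fun p => ⟨(p.1.2.2, p.1.2.1, p.1.1), mem_resonantSet_swap p.2⟩
      left_inv := fun _ => rfl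
      right_inv := fun _ => rfl }
  rw [resonantSum, ← swap.tsum_eq]
  refine tsum_congr fun p => ?_
  simp only [swap, Equiv.coe_fn_mk]
  ring

lemma injective_snd_thd : Function.Injective fun p : resonantSet α μ n => (p.1.2.1, p.1.2.2) := by
  rintro ⟨⟨a, b, c⟩, hp⟩ ⟨⟨a', b', c'⟩, hp'⟩ h
  obtain ⟨rfl, rfl⟩ : b = b' ∧ c = c' := Prod.mk.inj h
  obtain rfl : a = a' := by
    have := (mem_resonantSet_iff.mp hp).1
    have := (mem_resonantSet_iff.mp hp').1
    omega
  rfl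

lemma injective_fst_thd : Function.Injective fun p : resonantSet α μ n => (p.1.1, p.1.2.2) := by
  rintro ⟨⟨a, b, c⟩, hp⟩ ⟨⟨a', b', c'⟩, hp'⟩ h
  obtain ⟨rfl, rfl⟩ : a = a' ∧ c = c' := Prod.mk.inj h
  obtain rfl : b = b' := by
    have := (mem_resonantSet_iff.mp hp).1
    have := (mem_resonantSet_iff.mp hp').1
    omega
  rfl

lemma hasGrowthLE_thd_of_snd (hα : 1 / 2 < α) (hα' : α ≤ 1) (μ : ℝ) (n b : ℤ) :
    HasGrowthLE (growthConst α) (1 - α) {c | ∃ a, (a, b, c) ∈ resonantSet α μ n} := by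
  refine (hasGrowthLE_abs_rpow_add_abs_sub_rpow hα hα' (n + b)
    (|(n : ℝ)| ^ (2 * α) + |(b : ℝ)| ^ (2 * α) - μ)).mono ?_
  rintro c ⟨a, hmem⟩
  obtain ⟨hsum, -, -, hΦ⟩ := mem_resonantSet_iff.mp hmem
  have ha : (a : ℝ) = -(c - (n + b)) := by
    have : (a : ℝ) - b + c = n := by exact_mod_cast hsum
    linarith
  rw [ha, abs_neg, abs_lt] at hΦ
  rw [Set.mem_ofPred_eq, abs_lt]
  exact ⟨by linarith [hΦ.2], by linarith [hΦ.1]⟩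

lemma hasGrowthLE_fst_of_thd (hα : 1 / 2 < α) (hα' : α ≤ 1) (μ : ℝ) (n c : ℤ) :
    HasGrowthLE (growthConst α) (1 - α) {a | ∃ b, (a, b, c) ∈ resonantSet α μ n} := by
  refine (hasGrowthLE_abs_add_rpow_sub_abs_rpow hα hα' (c - n)
    (μ - |(n : ℝ)| ^ (2 * α) + |(c : ℝ)| ^ (2 * α))).mono ?_
  rintro a ⟨b, hmem⟩
  obtain ⟨hsum, hba, -, hΦ⟩ := mem_resonantSet_iff.mp hmem
  have hb : (b : ℝ) = a + (c - n : ℤ) := by exact_mod_cast (by omega : b = a + (c - n))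
  rw [hb, abs_lt] at hΦ
  rw [hb, add_sub_cancel_left] at hba
  exact ⟨Or.inr hba, abs_lt.mpr ⟨by linarith [hΦ.1], by linarith [hΦ.2]⟩⟩

lemma hasGrowthLE_snd_of_thd (hα : 1 / 2 < α) (hα' : α ≤ 1) (μ : ℝ) (n c : ℤ) :
    HasGrowthLE (growthConst α) (1 - α) {b | ∃ a, (a, b, c) ∈ resonantSet α μ n} := by
  refine (hasGrowthLE_abs_add_rpow_sub_abs_rpow hα hα' (n - c)
    (|(n : ℝ)| ^ (2 * α) - |(c : ℝ)| ^ (2 * α) - μ)).mono ?_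
  rintro b ⟨a, hmem⟩
  obtain ⟨hsum, hba, -, hΦ⟩ := mem_resonantSet_iff.mp hmem
  have ha : (a : ℝ) = b + (n - c : ℤ) := by exact_mod_cast (by omega : a = b + (n - c))
  rw [ha, abs_lt] at hΦ
  rw [ha, sub_add_cancel_left, abs_neg] at hba
  exact ⟨Or.inl hba, abs_lt.mpr ⟨by linarith [hΦ.2], by linarith [hΦ.1]⟩⟩

variable {s : ℝ}

/-- The constant of the trilinear estimate in terms of `α` and the Sobolev exponent `s`. -/
noncomputable def trilinearConst (α s : ℝ) : ℝ :=
  growthConst α * 2 ^ (1 - α) / (1 - 2 ^ (1 - α - 2 * s))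

lemma trilinearConst_pos (hα : 1 / 2 < α) (hs : (1 - α) / 2 < s) : 0 < trilinearConst α s := by
  have hcurv := curvature_pos hα
  have hgrowth : 0 < growthConst α := by rw [growthConst]; positivity
  have hratio : (2 : ℝ) ^ (1 - α - 2 * s) < 1 :=
    Real.rpow_lt_one_of_one_lt_of_neg one_lt_two (by linarith)
  exact div_pos (by positivity) (sub_pos.mpr hratio)

lemma resonantSum_le_iSup_fst (hα : 1 / 2 < α) (hα' : α ≤ 1) (hs : (1 - α) / 2 < s) (μ : ℝ)
    (n : ℤ) (ω₁ ω₂ ω₃ : ℤ → ℝ≥0) :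
    resonantSum α μ n ω₁ ω₂ ω₃ ≤ ENNReal.ofReal (trilinearConst α s) *
      (⨆ m, (ω₁ m : ℝ≥0∞)) * (l2sZ s ω₂ * l2sZ s ω₃) := by
  have hpair := tsum_comp_mul_comp_le_l2sZ (s := s) injective_snd_thd
    (hasGrowthLE_thd_of_snd hα hα' μ n) (fun p => ⟨p.1.1, p.2⟩)
    (hasGrowthLE_snd_of_thd hα hα' μ n) (fun p => ⟨p.1.1, p.2⟩)
    (by linarith) (by linarith) ω₂ ω₃
  calc resonantSum α μ n ω₁ ω₂ ω₃
      = ∑' p : resonantSet α μ n, (ω₁ p.1.1 : ℝ≥0∞) * (ω₂ p.1.2.1 * ω₃ p.1.2.2) :=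
        tsum_congr fun p => mul_assoc _ _ _
    _ ≤ (⨆ m, (ω₁ m : ℝ≥0∞)) * ∑' p : resonantSet α μ n, (ω₂ p.1.2.1 : ℝ≥0∞) * ω₃ p.1.2.2 :=
        tsum_comp_mul_le_iSup_mul (fun m => (ω₁ m : ℝ≥0∞)) _ _
    _ ≤ _ := by rw [mul_comm (ENNReal.ofReal _), mul_assoc]; gcongr; exact hpair

lemma resonantSum_le_iSup_snd (hα : 1 / 2 < α) (hα' : α ≤ 1) (hs : (1 - α) / 2 < s) (μ : ℝ)
    (n : ℤ) (ω₁ ω₂ ω₃ : ℤ → ℝ≥0) :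
    resonantSum α μ n ω₁ ω₂ ω₃ ≤ ENNReal.ofReal (trilinearConst α s) *
      (⨆ m, (ω₂ m : ℝ≥0∞)) * (l2sZ s ω₁ * l2sZ s ω₃) := by
  have hpair := tsum_comp_mul_comp_le_l2sZ (s := s) injective_fst_thd
    (hasGrowthLE_fst_of_thd hα hα' μ n) (fun p => ⟨p.1.2.1, mem_resonantSet_swap p.2⟩)
    (hasGrowthLE_fst_of_thd hα hα' μ n) (fun p => ⟨p.1.2.1, p.2⟩)
    (by linarith) (by linarith) ω₁ ω₃
  calc resonantSum α μ n ω₁ ω₂ ω₃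
      = ∑' p : resonantSet α μ n, (ω₂ p.1.2.1 : ℝ≥0∞) * (ω₁ p.1.1 * ω₃ p.1.2.2) :=
        tsum_congr fun p => by rw [mul_comm (ω₁ _ : ℝ≥0∞), mul_assoc]
    _ ≤ (⨆ m, (ω₂ m : ℝ≥0∞)) * ∑' p : resonantSet α μ n, (ω₁ p.1.1 : ℝ≥0∞) * ω₃ p.1.2.2 :=
        tsum_comp_mul_le_iSup_mul (fun m => (ω₂ m : ℝ≥0∞)) _ _
    _ ≤ _ := by rw [mul_comm (ENNReal.ofReal _), mul_assoc]; gcongr; exact hpair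

lemma resonantSum_le_iSup_thd (hα : 1 / 2 < α) (hα' : α ≤ 1) (hs : (1 - α) / 2 < s) (μ : ℝ)
    (n : ℤ) (ω₁ ω₂ ω₃ : ℤ → ℝ≥0) :
    resonantSum α μ n ω₁ ω₂ ω₃ ≤ ENNReal.ofReal (trilinearConst α s) *
      (⨆ m, (ω₃ m : ℝ≥0∞)) * (l2sZ s ω₁ * l2sZ s ω₂) := by
  rw [resonantSum_comm, mul_comm (l2sZ s ω₁)]
  exact resonantSum_le_iSup_fst hα hα' hs μ n ω₃ ω₂ ω₁

end Resonance

end FractionalNLS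

open FractionalNLS in
theorem fractional_NLS_B2_general (α : ℝ) (hα : 1 / 2 < α) (hα' : α ≤ 1)
    (s₁ : ℝ) (hs₁ : (1 - α) / 2 < s₁) :
    ∃ C : ℝ, 0 < C ∧
      ∀ (μ : ℝ) (ω₁ ω₂ ω₃ : ℤ → ℝ≥0),
        (⨆ n : ℤ, resonantSum α μ n ω₁ ω₂ ω₃)
          ≤ ENNReal.ofReal C * (⨆ m : ℤ, (ω₁ m : ℝ≥0∞)) * (l2sZ s₁ ω₂ * l2sZ s₁ ω₃) ∧
        (⨆ n : ℤ, resonantSum α μ n ω₁ ω₂ ω₃)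
          ≤ ENNReal.ofReal C * (⨆ m : ℤ, (ω₂ m : ℝ≥0∞)) * (l2sZ s₁ ω₁ * l2sZ s₁ ω₃) ∧
        (⨆ n : ℤ, resonantSum α μ n ω₁ ω₂ ω₃)
          ≤ ENNReal.ofReal C * (⨆ m : ℤ, (ω₃ m : ℝ≥0∞)) * (l2sZ s₁ ω₁ * l2sZ s₁ ω₂) :=
  ⟨trilinearConst α s₁, trilinearConst_pos hα hs₁, fun μ ω₁ ω₂ ω₃ =>
    ⟨iSup_le fun n => resonantSum_le_iSup_fst hα hα' hs₁ μ n ω₁ ω₂ ω₃,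
      iSup_le fun n => resonantSum_le_iSup_snd hα hα' hs₁ μ n ω₁ ω₂ ω₃,
      iSup_le fun n => resonantSum_le_iSup_thd hα hα' hs₁ μ n ω₁ ω₂ ω₃⟩⟩

/-- The estimate (B2) for the cubic fractional NLS: for `1/2 < α < 1`,
`s₁ > (1-α)/2`, and each `j ∈ {1,2,3}`, the `ℓ^∞` norm of the trilinear form restricted to
`Γ_n^N ∩ {|Φ-μ|<1}` is bounded by `C (sup ω⁽ʲ⁾) ∏_{l≠j} ‖ω⁽ˡ⁾‖_{ℓ²_{s₁}}`, uniformly in `μ`. -/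
theorem fractional_NLS_B2 (α : ℝ) (hα : 1/2 < α) (hα' : α < 1)
    (s₁ : ℝ) (hs₁ : (1 - α) / 2 < s₁) :
    ∃ C : ℝ, 0 < C ∧
      ∀ (μ : ℤ) (ω₁ ω₂ ω₃ : ℤ → ℝ≥0),
        (⨆ n : ℤ,
            ∑' p : {q : ℤ × ℤ × ℤ // GammaN α n q.1 q.2.1 q.2.2 ∧
                |PhiFrac α n q.1 q.2.1 q.2.2 - (μ : ℝ)| < 1},
              ((ω₁ p.1.1 : ℝ≥0∞) * (ω₂ p.1.2.1 : ℝ≥0∞) * (ω₃ p.1.2.2 : ℝ≥0∞)))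
          ≤ ENNReal.ofReal C * (⨆ m : ℤ, (ω₁ m : ℝ≥0∞)) * (l2sZ s₁ ω₂ * l2sZ s₁ ω₃) ∧
        (⨆ n : ℤ,
            ∑' p : {q : ℤ × ℤ × ℤ // GammaN α n q.1 q.2.1 q.2.2 ∧
                |PhiFrac α n q.1 q.2.1 q.2.2 - (μ : ℝ)| < 1},
              ((ω₁ p.1.1 : ℝ≥0∞) * (ω₂ p.1.2.1 : ℝ≥0∞) * (ω₃ p.1.2.2 : ℝ≥0∞)))
          ≤ ENNReal.ofReal C * (⨆ m : ℤ, (ω₂ m : ℝ≥0∞)) * (l2sZ s₁ ω₁ * l2sZ s₁ ω₃) ∧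
        (⨆ n : ℤ,
            ∑' p : {q : ℤ × ℤ × ℤ // GammaN α n q.1 q.2.1 q.2.2 ∧
                |PhiFrac α n q.1 q.2.1 q.2.2 - (μ : ℝ)| < 1},
              ((ω₁ p.1.1 : ℝ≥0∞) * (ω₂ p.1.2.1 : ℝ≥0∞) * (ω₃ p.1.2.2 : ℝ≥0∞)))
          ≤ ENNReal.ofReal C * (⨆ m : ℤ, (ω₃ m : ℝ≥0∞)) * (l2sZ s₁ ω₁ * l2sZ s₁ ω₂) := by
  obtain ⟨C, hC, hbound⟩ := fractional_NLS_B2_general α hα hα'.le s₁ hs₁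
  exact ⟨C, hC, fun μ => hbound μ⟩
end

section
/- Let 1/2 < s < 1. Then there exists C > 0 such that for every n ∈ ℤ: Σ_{(n₁,n₂,n₃) ∈ ℤ³ : n₁ − n₂ + n₃ = n, n₂ ≠ n₁, n₂ ≠ n₃} n₂² ⟨n⟩^{2s} / ( |n₂−n₁| · |n₂−n₃| · ⟨n₁⟩^{2s} ⟨n₂⟩^{2s} ⟨n₃⟩^{2s} ) ≤ C. -/
open scoped ENNReal

/-- `⟨x⟩ = (1+x²)^{1/2}`. -/
noncomputable def jbR (x : ℝ) : ℝ := Real.sqrt (1 + x ^ 2)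

/-!
Let `r = 2s`. Since `n₂ - n₃ = n₁ - n` and `n₂ - n₁ = n₃ - n`, the denominator is governed by the
pairs of brackets `⟨n₁⟩, ⟨n₁ - n⟩` and `⟨n₃⟩, ⟨n₃ - n⟩`, and `⟨n⟩` is at most the sum of either
pair. When `r ≤ 2`, the factor `⟨n₂⟩²⁻ʳ` is at most `⟨n₁⟩²⁻ʳ + ⟨n₃ - n⟩²⁻ʳ`; in each of the two
resulting terms `⟨n⟩ʳ = ⟨n⟩ʳ⁻¹ ⟨n⟩` is distributed over the pairs so that each pair keeps total
decay `r`. What remains is a product of a function of `n₁` and a function of `n₃`, with sums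
independent of `n`. Larger `r` reduce to `r = 2` because `⟨n⟩ ≤ 3 ⟨n₁⟩ ⟨n₂⟩ ⟨n₃⟩`.
-/

theorem jbR_sq (x : ℝ) : jbR x ^ 2 = 1 + x ^ 2 :=
  Real.sq_sqrt (by positivity)

theorem one_le_jbR (x : ℝ) : 1 ≤ jbR x :=
  Real.one_le_sqrt.2 (by linarith [sq_nonneg x])

theorem jbR_pos (x : ℝ) : 0 < jbR x :=
  one_pos.trans_le (one_le_jbR x)

theorem abs_le_jbR (x : ℝ) : |x| ≤ jbR x :=
  Real.abs_le_sqrt (by linarith)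

theorem jbR_neg (x : ℝ) : jbR (-x) = jbR x := by
  simp only [jbR, neg_sq]

theorem jbR_add_le (x y : ℝ) : jbR (x + y) ≤ jbR x + jbR y := by
  have hxy : x * y ≤ jbR x * jbR y :=
    (le_abs_self _).trans <| (abs_mul x y).trans_le <|
      mul_le_mul (abs_le_jbR x) (abs_le_jbR y) (abs_nonneg y) (jbR_pos x).le
  refine Real.sqrt_le_iff.2 ⟨(add_pos (jbR_pos x) (jbR_pos y)).le, ?_⟩
  linarith [jbR_sq x, jbR_sq y, add_sq x y, add_sq (jbR x) (jbR y)]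

theorem jbR_sub_le (x y : ℝ) : jbR (x - y) ≤ jbR x + jbR y := by
  simpa only [sub_eq_add_neg, jbR_neg] using jbR_add_le x (-y)

theorem jbR_sub_add_le_mul (x y z : ℝ) :
    jbR (x - y + z) ≤ 3 * (jbR x * jbR y * jbR z) := by
  have hx := one_le_jbR x
  have hy := one_le_jbR y
  have hz := one_le_jbR z
  have hxy : 1 ≤ jbR x * jbR y := one_le_mul_of_one_le_of_one_le hx hy
  have hx_le : jbR x ≤ jbR x * jbR y := le_mul_of_one_le_right (jbR_pos x).le hy
  have hy_le : jbR y ≤ jbR x * jbR y := le_mul_of_one_le_left (jbR_pos y).le hx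
  have hxy_le : jbR x * jbR y ≤ jbR x * jbR y * jbR z :=
    le_mul_of_one_le_right (one_pos.le.trans hxy) hz
  have hz_le : jbR z ≤ jbR x * jbR y * jbR z := le_mul_of_one_le_left (jbR_pos z).le hxy
  linarith [jbR_add_le (x - y) z, jbR_sub_le x y]

theorem jbR_le_two_mul_abs {x : ℝ} (hx : 1 ≤ |x|) : jbR x ≤ 2 * |x| :=
  Real.sqrt_le_iff.2 ⟨by positivity, by nlinarith [sq_abs x]⟩

theorem summable_jbR_intCast_rpow_neg {r : ℝ} (hr : 1 < r) :
    Summable fun a : ℤ ↦ jbR a ^ (-r) := by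
  refine (Real.summable_abs_int_rpow hr).of_norm_bounded_eventually ?_
  filter_upwards [Filter.eventually_cofinite_ne 0] with a ha
  have ha' : 0 < |(a : ℝ)| := abs_pos.2 (Int.cast_ne_zero.2 ha)
  rw [Real.norm_of_nonneg (Real.rpow_nonneg (jbR_pos a).le _)]
  exact Real.rpow_le_rpow_of_nonpos ha' (abs_le_jbR a) (by linarith)

/-- The one-variable majorant `⟨a⟩⁻ʳ + ⟨a - k⟩⁻ʳ`, concentrated near `0` and near `k`. -/
noncomputable def twoPointDecay (r k a : ℝ) : ℝ := jbR a ^ (-r) + jbR (a - k) ^ (-r)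

theorem twoPointDecay_nonneg (r k a : ℝ) : 0 ≤ twoPointDecay r k a :=
  add_nonneg (Real.rpow_nonneg (jbR_pos _).le _) (Real.rpow_nonneg (jbR_pos _).le _)

theorem hasSum_twoPointDecay {r : ℝ} (hr : 1 < r) (k : ℤ) :
    HasSum (fun a : ℤ ↦ twoPointDecay r k a) (2 * ∑' a : ℤ, jbR a ^ (-r)) := by
  have h := (summable_jbR_intCast_rpow_neg hr).hasSum
  have h_shift := (Equiv.subRight k).hasSum_iff.2 h
  simp only [Function.comp_def, Equiv.subRight_apply, Int.cast_sub] at h_shift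
  rw [two_mul]
  exact h.add h_shift

theorem rpow_mul_rpow_neg_mul_rpow_neg_le {k a b θ p q r : ℝ} (hk : 0 ≤ k) (ha : 0 < a)
    (hb : 0 < b) (hkab : k ≤ a + b) (hθ : 0 ≤ θ) (hp : θ ≤ p) (hq : θ ≤ q) (hpq : p + q = θ + r) :
    k ^ θ * (a ^ (-p) * b ^ (-q)) ≤ 2 ^ θ * (a ^ (-r) + b ^ (-r)) := by
  wlog hab : a ≤ b generalizing a b p q
  · have h_swap := this hb ha (by linarith) hq hp (by linarith) (le_of_not_ge hab)
    rwa [mul_comm (b ^ _), add_comm (b ^ _)] at h_swap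
  have hr : -p + (θ - q) = -r := by linarith
  calc k ^ θ * (a ^ (-p) * b ^ (-q))
      ≤ (2 * b) ^ θ * (a ^ (-p) * b ^ (-q)) := by gcongr; linarith
    _ = 2 ^ θ * (a ^ (-p) * b ^ (θ - q)) := by
        rw [Real.mul_rpow zero_le_two hb.le, sub_eq_add_neg, Real.rpow_add hb]; ring
    _ ≤ 2 ^ θ * (a ^ (-p) * a ^ (θ - q)) := by
        gcongr 2 ^ θ * (a ^ (-p) * ?_)
        exact Real.rpow_le_rpow_of_nonpos ha hab (by linarith)
    _ = 2 ^ θ * a ^ (-r) := by rw [← Real.rpow_add ha, hr]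
    _ ≤ 2 ^ θ * (a ^ (-r) + b ^ (-r)) := by
        gcongr; exact le_add_of_nonneg_right (by positivity)

theorem rpow_two_sub_mul_rpow_mul_le {r m k a b c d : ℝ} (hr : 1 ≤ r) (hr' : r ≤ 2)
    (hm : 0 ≤ m) (hk : 0 < k) (ha : 0 < a) (hb : 0 < b) (hc : 0 < c) (hd : 0 < d)
    (hmad : m ≤ a + d) (hkab : k ≤ a + b) (hkcd : k ≤ c + d) :
    m ^ (2 - r) * (k ^ r * ((a ^ (-r) * b ^ (-1 : ℝ)) * (c ^ (-r) * d ^ (-1 : ℝ)))) ≤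
      2 ^ (r + 1) * ((a ^ (-r) + b ^ (-r)) * (c ^ (-r) + d ^ (-r))) := by
  have h_split : m ^ (2 - r) ≤ a ^ (2 - r) + d ^ (2 - r) :=
    (Real.rpow_le_rpow hm hmad (by linarith)).trans
      (Real.rpow_add_le_add_rpow ha.le hd.le (by linarith) (by linarith))
  have hk_split : k ^ r = k ^ (r - 1) * k ^ (1 : ℝ) := by
    rw [← Real.rpow_add hk, sub_add_cancel]
  have h2_split : (2 : ℝ) ^ (r + 1) = 2 * (2 ^ (r - 1) * 2 ^ (1 : ℝ)) := by
    rw [← Real.rpow_add two_pos, sub_add_cancel, Real.rpow_add_one two_ne_zero, mul_comm]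
  have ha_absorb : a ^ (2 - r) * a ^ (-r) = a ^ (-(2 * (r - 1))) := by
    rw [← Real.rpow_add ha]; ring_nf
  have hd_absorb : d ^ (2 - r) * d ^ (-1 : ℝ) = d ^ (-(r - 1)) := by
    rw [← Real.rpow_add hd]; ring_nf
  calc m ^ (2 - r) * (k ^ r * ((a ^ (-r) * b ^ (-1 : ℝ)) * (c ^ (-r) * d ^ (-1 : ℝ))))
      ≤ (a ^ (2 - r) + d ^ (2 - r)) *
          (k ^ r * ((a ^ (-r) * b ^ (-1 : ℝ)) * (c ^ (-r) * d ^ (-1 : ℝ)))) := by gcongr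
    _ = (k ^ (r - 1) * (a ^ (-(2 * (r - 1))) * b ^ (-1 : ℝ))) *
            (k ^ (1 : ℝ) * (c ^ (-r) * d ^ (-1 : ℝ))) +
          (k ^ (1 : ℝ) * (a ^ (-r) * b ^ (-1 : ℝ))) *
            (k ^ (r - 1) * (c ^ (-r) * d ^ (-(r - 1)))) := by
        rw [← ha_absorb, ← hd_absorb, hk_split]; ring
    _ ≤ (2 ^ (r - 1) * (a ^ (-r) + b ^ (-r))) * (2 ^ (1 : ℝ) * (c ^ (-r) + d ^ (-r))) +
          (2 ^ (1 : ℝ) * (a ^ (-r) + b ^ (-r))) * (2 ^ (r - 1) * (c ^ (-r) + d ^ (-r))) := by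
        gcongr ?_ * ?_ + ?_ * ?_
        · exact rpow_mul_rpow_neg_mul_rpow_neg_le hk.le ha hb hkab (by linarith)
            (by linarith) (by linarith) (by ring)
        · exact rpow_mul_rpow_neg_mul_rpow_neg_le hk.le hc hd hkcd zero_le_one hr le_rfl
            (by ring)
        · exact rpow_mul_rpow_neg_mul_rpow_neg_le hk.le ha hb hkab zero_le_one hr le_rfl
            (by ring)
        · exact rpow_mul_rpow_neg_mul_rpow_neg_le hk.le hc hd hkcd (by linarith)
            (by linarith) le_rfl (by ring)
    _ = 2 ^ (r + 1) * ((a ^ (-r) + b ^ (-r)) * (c ^ (-r) + d ^ (-r))) := by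
        rw [h2_split]; ring

theorem tsum_ofReal_le_of_le_mul_comp {ι α β : Type*} {F : ι → ℝ} {f : α → ℝ} {g : β → ℝ}
    {c A B : ℝ} (φ : ι ↪ α × β) (hc : 0 ≤ c) (hf : 0 ≤ f) (hg : 0 ≤ g) (hfA : HasSum f A)
    (hgB : HasSum g B) (hF : ∀ i, F i ≤ c * (f (φ i).1 * g (φ i).2)) :
    ∑' i, ENNReal.ofReal (F i) ≤ ENNReal.ofReal (c * (A * B)) := by
  have h_sum : HasSum (fun p : α × β ↦ c * (f p.1 * g p.2)) (c * (A * B)) :=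
    (hfA.mul hgB (hfA.summable.mul_of_nonneg hgB.summable hf hg)).mul_left c
  calc ∑' i, ENNReal.ofReal (F i)
      ≤ ∑' i, ENNReal.ofReal (c * (f (φ i).1 * g (φ i).2)) :=
        ENNReal.tsum_le_tsum fun i ↦ ENNReal.ofReal_le_ofReal (hF i)
    _ ≤ ∑' p : α × β, ENNReal.ofReal (c * (f p.1 * g p.2)) :=
        ENNReal.tsum_comp_le_tsum_of_injective φ.injective
          fun p ↦ ENNReal.ofReal (c * (f p.1 * g p.2))
    _ = ENNReal.ofReal (c * (A * B)) := by
        rw [← h_sum.tsum_eq, ENNReal.ofReal_tsum_of_nonneg _ h_sum.summable]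
        exact fun p ↦ mul_nonneg hc (mul_nonneg (hf p.1) (hg p.2))

/-- The summand of the DNLS sum at the real frequencies `n = k`, `n₁ = x`, `n₂ = y`, `n₃ = z`, with
`r` in place of `2s`. -/
noncomputable def dnlsWeight (r k x y z : ℝ) : ℝ :=
  y ^ 2 * jbR k ^ r / (|y - x| * |y - z| * jbR x ^ r * jbR y ^ r * jbR z ^ r)

theorem dnlsWeight_eq_mul_rpow_ratio (r k x y z : ℝ) :
    dnlsWeight r k x y z =
      y ^ 2 / (|y - x| * |y - z|) * (jbR k / (jbR x * jbR y * jbR z)) ^ r := by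
  have hx := (jbR_pos x).le
  have hy := (jbR_pos y).le
  have hz := (jbR_pos z).le
  rw [Real.div_rpow (jbR_pos _).le (by positivity), Real.mul_rpow (by positivity) hz,
    Real.mul_rpow hx hy, div_mul_div_comm, dnlsWeight]
  simp only [mul_assoc]

theorem dnlsWeight_le_of_exponent_le {t r k x y z : ℝ} (htr : t ≤ r) (hk_eq : x - y + z = k) :
    dnlsWeight r k x y z ≤ 3 ^ (r - t) * dnlsWeight t k x y z := by
  have hx := jbR_pos x
  have hy := jbR_pos y
  have hz := jbR_pos z
  have hk := jbR_pos k
  have h_ratio : jbR k / (jbR x * jbR y * jbR z) ≤ 3 :=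
    (div_le_iff₀ (by positivity)).2 (hk_eq ▸ jbR_sub_add_le_mul x y z)
  rw [dnlsWeight_eq_mul_rpow_ratio, dnlsWeight_eq_mul_rpow_ratio, mul_left_comm]
  gcongr
  calc (jbR k / (jbR x * jbR y * jbR z)) ^ r
      = (jbR k / (jbR x * jbR y * jbR z)) ^ (r - t) *
          (jbR k / (jbR x * jbR y * jbR z)) ^ t := by
        rw [← Real.rpow_add (by positivity), sub_add_cancel]
    _ ≤ 3 ^ (r - t) * (jbR k / (jbR x * jbR y * jbR z)) ^ t := by
        gcongr

theorem dnlsWeight_le_four_mul (r k : ℝ) {x y z : ℝ} (hyx : 1 ≤ |y - x|) (hyz : 1 ≤ |y - z|) :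
    dnlsWeight r k x y z ≤
      4 * (jbR y ^ (2 - r) * (jbR k ^ r *
        ((jbR x ^ (-r) * jbR (y - z) ^ (-1 : ℝ)) * (jbR z ^ (-r) * jbR (y - x) ^ (-1 : ℝ))))) := by
  have hx := jbR_pos x
  have hy := jbR_pos y
  have hz := jbR_pos z
  have hk := jbR_pos k
  have hx' := jbR_pos (y - x)
  have hz' := jbR_pos (y - z)
  have hy_sq : y ^ 2 ≤ jbR y ^ (2 - r) * jbR y ^ r := by
    rw [← Real.rpow_add hy, sub_add_cancel, Real.rpow_two, jbR_sq]
    linarith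
  calc dnlsWeight r k x y z
      ≤ jbR y ^ (2 - r) * jbR y ^ r * jbR k ^ r /
          (jbR (y - x) / 2 * (jbR (y - z) / 2) * jbR x ^ r * jbR y ^ r * jbR z ^ r) := by
        unfold dnlsWeight
        gcongr
        · linarith [jbR_le_two_mul_abs hyx]
        · linarith [jbR_le_two_mul_abs hyz]
    _ = 4 * (jbR y ^ (2 - r) * (jbR k ^ r *
          ((jbR x ^ (-r) * jbR (y - z) ^ (-1 : ℝ)) *
            (jbR z ^ (-r) * jbR (y - x) ^ (-1 : ℝ))))) := by
        rw [Real.rpow_neg hx.le, Real.rpow_neg hz.le, Real.rpow_neg_one, Real.rpow_neg_one]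
        field_simp
        norm_num

theorem dnlsWeight_le_twoPointDecay_mul {r k x y z : ℝ} (hr : 1 ≤ r) (hr' : r ≤ 2)
    (hk : x - y + z = k) (hyx : 1 ≤ |y - x|) (hyz : 1 ≤ |y - z|) :
    dnlsWeight r k x y z ≤ 4 * 2 ^ (r + 1) * (twoPointDecay r k x * twoPointDecay r k z) := by
  have h_gap_x : y - z = x - k := by linarith
  have h_gap_z : y - x = z - k := by linarith
  have hy_le : jbR y ≤ jbR x + jbR (z - k) := by
    simpa only [← h_gap_z, add_sub_cancel] using jbR_add_le x (y - x)
  have hkx : jbR k ≤ jbR x + jbR (x - k) := by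
    simpa only [sub_sub_cancel] using jbR_sub_le x (x - k)
  have hkz : jbR k ≤ jbR z + jbR (z - k) := by
    simpa only [sub_sub_cancel] using jbR_sub_le z (z - k)
  have h_weight := dnlsWeight_le_four_mul r k hyx hyz
  rw [h_gap_x, h_gap_z] at h_weight
  rw [twoPointDecay, twoPointDecay, mul_assoc]
  exact h_weight.trans <| mul_le_mul_of_nonneg_left
    (rpow_two_sub_mul_rpow_mul_le hr hr' (jbR_pos _).le (jbR_pos _) (jbR_pos _) (jbR_pos _)
      (jbR_pos _) (jbR_pos _) hy_le hkx hkz) zero_le_four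

/-- The triples `(n₁, n₂, n₃)` with `n₁ - n₂ + n₃ = n`, `n₂ ≠ n₁`, `n₂ ≠ n₃`, over which the DNLS
sum at output frequency `n` runs. -/
abbrev ResonantTriple (n : ℤ) : Type :=
  {q : ℤ × ℤ × ℤ // q.1 - q.2.1 + q.2.2 = n ∧ q.2.1 ≠ q.1 ∧ q.2.1 ≠ q.2.2}

namespace ResonantTriple

/-- A triple is determined by `(n₁, n₃)`, since `n₂ = n₁ + n₃ - n`. -/
def outerEmbedding (n : ℤ) : ResonantTriple n ↪ ℤ × ℤ where
  toFun p := (p.1.1, p.1.2.2)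
  inj' := by
    rintro ⟨⟨a, b, c⟩, h, _⟩ ⟨⟨a', b', c'⟩, h', _⟩ heq
    simp only [Prod.mk.injEq, Subtype.mk.injEq] at heq h h' ⊢
    omega

theorem dnlsWeight_le {n : ℤ} (p : ResonantTriple n) {t r : ℝ} (ht : 1 ≤ t) (ht' : t ≤ 2)
    (htr : t ≤ r) :
    dnlsWeight r n p.1.1 p.1.2.1 p.1.2.2 ≤
      3 ^ (r - t) * (4 * 2 ^ (t + 1)) *
        (twoPointDecay t n p.1.1 * twoPointDecay t n p.1.2.2) := by
  obtain ⟨⟨a, b, c⟩, h_sum, hba, hbc⟩ := p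
  have hn : (a : ℝ) - b + c = n := by exact_mod_cast h_sum
  have one_le_gap {i j : ℤ} (hij : i ≠ j) : 1 ≤ |(i : ℝ) - j| := by
    exact_mod_cast Int.one_le_abs (sub_ne_zero.2 hij)
  rw [mul_assoc]
  exact (dnlsWeight_le_of_exponent_le htr hn).trans <| mul_le_mul_of_nonneg_left
    (dnlsWeight_le_twoPointDecay_mul ht ht' hn (one_le_gap hba) (one_le_gap hbc)) (by positivity)

end ResonantTriple

theorem DNLS_weight_sum_bound_general (s : ℝ) (hs : 1 / 2 < s) :
    ∃ C : ℝ, 0 < C ∧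
      ∀ n : ℤ,
        ∑' p : ResonantTriple n, ENNReal.ofReal (dnlsWeight (2 * s) n p.1.1 p.1.2.1 p.1.2.2) ≤
          ENNReal.ofReal C := by
  set t := min (2 * s) 2
  have ht : 1 < t := lt_min (by linarith) one_lt_two
  set S := ∑' a : ℤ, jbR a ^ (-t)
  have hS : 0 < S :=
    (summable_jbR_intCast_rpow_neg ht).tsum_pos (fun a ↦ Real.rpow_nonneg (jbR_pos a).le _) 0
      (Real.rpow_pos_of_pos (jbR_pos _) _)
  refine ⟨3 ^ (2 * s - t) * (4 * 2 ^ (t + 1)) * (2 * S * (2 * S)), by positivity, fun n ↦ ?_⟩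
  exact tsum_ofReal_le_of_le_mul_comp (ResonantTriple.outerEmbedding n) (by positivity)
    (fun a ↦ twoPointDecay_nonneg t n a) (fun a ↦ twoPointDecay_nonneg t n a)
    (hasSum_twoPointDecay ht n) (hasSum_twoPointDecay ht n)
    fun p ↦ p.dnlsWeight_le ht.le (min_le_right _ _) (min_le_left _ _)

/-- For `1/2 < s < 1` there is `C > 0` such that, uniformly in `n ∈ ℤ`,
`Σ_{n₁-n₂+n₃=n, n₂≠n₁, n₂≠n₃} n₂² ⟨n⟩^{2s} / (|n₂-n₁| |n₂-n₃| ⟨n₁⟩^{2s} ⟨n₂⟩^{2s} ⟨n₃⟩^{2s}) ≤ C`. -/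
theorem DNLS_weight_sum_bound (s : ℝ) (hs : 1/2 < s) (hs' : s < 1) :
    ∃ C : ℝ, 0 < C ∧
      ∀ n : ℤ,
        (∑' p : {q : ℤ × ℤ × ℤ //
            q.1 - q.2.1 + q.2.2 = n ∧ q.2.1 ≠ q.1 ∧ q.2.1 ≠ q.2.2},
          ENNReal.ofReal (((p.1.2.1 : ℝ) ^ 2 * jbR (n : ℝ) ^ (2 * s)) /
            ((|p.1.2.1 - p.1.1| : ℝ) * (|p.1.2.1 - p.1.2.2| : ℝ) *
              jbR (p.1.1 : ℝ) ^ (2 * s) * jbR (p.1.2.1 : ℝ) ^ (2 * s) *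
              jbR (p.1.2.2 : ℝ) ^ (2 * s))))
          ≤ ENNReal.ofReal C :=
  DNLS_weight_sum_bound_general s hs
end
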